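/- arXiv:math/0703883 — 2 statements merged into one kernel-verified Lean document; each statement's English description precedes it below -/
import Mathlib

section
/- Let n ≥ 1, let 1 ≤ p, q ≤ ∞, s > 0, α > 0, and choose 1 ≤ p₁, p₂, q₁, q₂ ≤ ∞ with 1/p = 1/p₁ + 1/p₂ and 1/q = 1/q₁ + 1/q₂. Then there exists a constant C > 0, depending only on n, s, α and these indices, such that for all Schwartz functions f₁, f₂ on ℝⁿ the remainder series R(f₁,f₂) = Σ_{i,j∈ℤ, |i−j|≤1} (Δ_i f₁)(Δ_j f₂) converges in the space of tempered distributions and satisfies ‖Σ_{|i−j|≤1} (Δ_i f₁)(Δ_j f₂)‖_{Ḃ^s_{p,q}} ≤ C ‖f₁‖_{Ḃ^{s+α}_{p₁,q₁}} ‖f₂‖_{Ḃ^{-α}_{p₂,q₂}} in [0,∞]. -/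
open MeasureTheory Real Complex Filter Function
open scoped ENNReal FourierTransform SchwartzMap

noncomputable section

/-- The properties of the radial smooth cutoff `χ` used to build the
Littlewood–Paley decomposition: smooth, compactly supported, radial,
`0 ≤ χ ≤ 1`, `χ = 1` on `{‖ξ‖ ≤ 3/4}` and `χ = 0` on `{‖ξ‖ > 4/3}`. -/
def IsLPCutoff {n : ℕ} (χ : EuclideanSpace ℝ (Fin n) → ℝ) : Prop :=
  ContDiff ℝ ((⊤ : ℕ∞) : WithTop ℕ∞) χ ∧ HasCompactSupport χ ∧
    (∀ ξ η, ‖ξ‖ = ‖η‖ → χ ξ = χ η) ∧ (∀ ξ, 0 ≤ χ ξ) ∧ (∀ ξ, χ ξ ≤ 1) ∧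
    (∀ ξ, ‖ξ‖ ≤ 3 / 4 → χ ξ = 1) ∧ (∀ ξ, 4 / 3 < ‖ξ‖ → χ ξ = 0)

/-- The low-frequency Littlewood–Paley projection `S_j f = 𝓕⁻¹(χ(·/2^j) 𝓕 f)`. -/
def Sproj {n : ℕ} (χ : EuclideanSpace ℝ (Fin n) → ℝ) (j : ℤ)
    (f : EuclideanSpace ℝ (Fin n) → ℂ) : EuclideanSpace ℝ (Fin n) → ℂ :=
  𝓕⁻ fun ξ => ((χ ((2 : ℝ) ^ (-j) • ξ) : ℝ) : ℂ) * 𝓕 f ξ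

/-- The Littlewood–Paley block `Δ_j f = 𝓕⁻¹(φ̂(·/2^j) 𝓕 f)`, where
`φ̂(ξ) = χ(ξ/2) - χ(ξ)`, i.e. `φ̂(ξ/2^j) = χ(ξ/2^(j+1)) - χ(ξ/2^j)`. -/
def Dproj {n : ℕ} (χ : EuclideanSpace ℝ (Fin n) → ℝ) (j : ℤ)
    (f : EuclideanSpace ℝ (Fin n) → ℂ) : EuclideanSpace ℝ (Fin n) → ℂ :=
  𝓕⁻ fun ξ => ((χ ((2 : ℝ) ^ (-(j + 1)) • ξ) - χ ((2 : ℝ) ^ (-j) • ξ) : ℝ) : ℂ) * 𝓕 f ξ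

/-- The `ℓ^q(ℤ)` norm of a sequence of extended nonnegative reals, with the usual
supremum modification for `q = ∞`. -/
def lqNorm (q : ℝ≥0∞) (a : ℤ → ℝ≥0∞) : ℝ≥0∞ :=
  if q = ∞ then ⨆ j, a j else (∑' j, a j ^ q.toReal) ^ (1 / q.toReal)

/-- The homogeneous Besov norm `‖f‖_{Ḃ^s_{p,q}}`, valued in `[0,∞]`. -/
def besovNorm {n : ℕ} (χ : EuclideanSpace ℝ (Fin n) → ℝ) (s : ℝ) (p q : ℝ≥0∞)
    (f : EuclideanSpace ℝ (Fin n) → ℂ) : ℝ≥0∞ :=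
  lqNorm q fun j => (2 : ℝ≥0∞) ^ ((j : ℝ) * s) * eLpNorm (Dproj χ j f) p volume

/-- **Minkowski's inequality** for countable sums of `[0,∞]`-valued functions. -/
lemma eLpNorm_tsum_le {ι X : Type*} [Countable ι] [MeasurableSpace X] {μ : Measure X}
    {p : ℝ≥0∞} (hp : 1 ≤ p) {F : ι → X → ℝ≥0∞} (hF : ∀ i, AEMeasurable (F i) μ) :
    eLpNorm (fun x => ∑' i, F i x) p μ ≤ ∑' i, eLpNorm (F i) p μ := by
  rcases eq_or_ne p ∞ with rfl | hp_top
  · simp only [eLpNorm_exponent_top]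
    refine essSup_le_of_ae_le _ ?_
    have h : ∀ᵐ x ∂μ, ∀ i, ‖F i x‖ₑ ≤ eLpNormEssSup (F i) μ :=
      ae_all_iff.2 fun i => ae_le_eLpNormEssSup
    filter_upwards [h] with x hx
    exact ENNReal.tsum_le_tsum hx
  · have hp0 : p ≠ 0 := (zero_lt_one.trans_le hp).ne'
    have hpr : 0 < p.toReal := ENNReal.toReal_pos hp0 hp_top
    rw [eLpNorm_eq_lintegral_rpow_enorm_toReal hp0 hp_top, one_div,
      ENNReal.rpow_inv_le_iff hpr]
    have hsup : ∀ x, ‖∑' i, F i x‖ₑ ^ p.toReal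
        = ⨆ t : Finset ι, (∑ i ∈ t, F i x) ^ p.toReal := fun x => by
      rw [enorm_eq_self, ENNReal.tsum_eq_iSup_sum]
      exact (ENNReal.orderIsoRpow p.toReal hpr).map_iSup _
    simp_rw [hsup]
    rw [lintegral_iSup_directed]
    · refine iSup_le fun t => ?_
      rw [← ENNReal.rpow_inv_le_iff hpr, ← one_div]
      have h := eLpNorm_sum_le (s := t) (fun i _ => (hF i).aestronglyMeasurable) hp
      rw [eLpNorm_eq_lintegral_rpow_enorm_toReal hp0 hp_top] at h
      simp only [Finset.sum_apply, enorm_eq_self] at h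
      exact h.trans (ENNReal.sum_le_tsum t)
    · exact fun t => (Finset.aemeasurable_fun_sum t fun i _ => hF i).pow_const _
    · refine Monotone.directed_le fun t u htu x => ?_
      exact ENNReal.rpow_le_rpow (Finset.sum_le_sum_of_subset htu) hpr.le

lemma lqNorm_eq_eLpNorm_count {q : ℝ≥0∞} (hq : 1 ≤ q) (a : ℤ → ℝ≥0∞) :
    lqNorm q a = eLpNorm a q Measure.count := by
  unfold lqNorm
  split_ifs with h
  · subst h
    simp [eLpNorm_exponent_top, eLpNormEssSup]
  · rw [eLpNorm_eq_lintegral_rpow_enorm_toReal (zero_lt_one.trans_le hq).ne' h]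
    simp [lintegral_count]

lemma lqNorm_mono {q : ℝ≥0∞} {a b : ℤ → ℝ≥0∞} (h : ∀ j, a j ≤ b j) :
    lqNorm q a ≤ lqNorm q b := by
  unfold lqNorm
  split_ifs
  · exact iSup_mono h
  · gcongr
    exact h _

lemma lqNorm_tsum_le {ι : Type*} [Countable ι] {q : ℝ≥0∞} (hq : 1 ≤ q)
    (a : ι → ℤ → ℝ≥0∞) :
    lqNorm q (fun k => ∑' i, a i k) ≤ ∑' i, lqNorm q (a i) := by
  simp only [lqNorm_eq_eLpNorm_count hq]
  exact eLpNorm_tsum_le hq fun i => (measurable_of_countable _).aemeasurable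

lemma lqNorm_const_mul {q : ℝ≥0∞} (hq : 1 ≤ q) (c : ℝ≥0∞) (a : ℤ → ℝ≥0∞) :
    lqNorm q (fun k => c * a k) = c * lqNorm q a := by
  unfold lqNorm
  split_ifs with h
  · rw [ENNReal.mul_iSup]
  · have hqr : 0 < q.toReal := ENNReal.toReal_pos (zero_lt_one.trans_le hq).ne' h
    simp_rw [ENNReal.mul_rpow_of_nonneg _ _ hqr.le]
    rw [ENNReal.tsum_mul_left, ENNReal.mul_rpow_of_nonneg _ _ (by positivity),
      ← ENNReal.rpow_mul, mul_one_div_cancel hqr.ne', ENNReal.rpow_one]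

lemma lqNorm_comp_equiv (q : ℝ≥0∞) (a : ℤ → ℝ≥0∞) (e : ℤ ≃ ℤ) :
    lqNorm q (fun k => a (e k)) = lqNorm q a := by
  unfold lqNorm
  rw [e.iSup_comp, e.tsum_eq fun j => a j ^ q.toReal]

/-- **Hölder's inequality** for `lqNorm`. -/
lemma lqNorm_mul_le {q q₁ q₂ : ℝ≥0∞} (hq : 1 ≤ q) (hq₁ : 1 ≤ q₁) (hq₂ : 1 ≤ q₂)
    (h : 1 / q = 1 / q₁ + 1 / q₂) (a b : ℤ → ℝ≥0∞) :
    lqNorm q (fun k => a k * b k) ≤ lqNorm q₁ a * lqNorm q₂ b := by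
  rcases eq_or_ne q₁ ∞ with rfl | h₁
  · obtain rfl : q = q₂ := by simpa using h
    have ha : lqNorm ∞ a = ⨆ j, a j := by simp [lqNorm]
    rw [ha, ← lqNorm_const_mul hq]
    exact lqNorm_mono fun k => by gcongr; exact le_iSup a k
  rcases eq_or_ne q₂ ∞ with rfl | h₂
  · obtain rfl : q = q₁ := by simpa using h
    have hb : lqNorm ∞ b = ⨆ j, b j := by simp [lqNorm]
    rw [hb, mul_comm, ← lqNorm_const_mul hq]
    exact lqNorm_mono fun k => by rw [mul_comm]; gcongr; exact le_iSup b k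
  have p₁ : 0 < q₁.toReal := ENNReal.toReal_pos (zero_lt_one.trans_le hq₁).ne' h₁
  have p₂ : 0 < q₂.toReal := ENNReal.toReal_pos (zero_lt_one.trans_le hq₂).ne' h₂
  have n₁ : q₁ ≠ 0 := (zero_lt_one.trans_le hq₁).ne'
  have n₂ : q₂ ≠ 0 := (zero_lt_one.trans_le hq₂).ne'
  have htop : q ≠ ∞ := by
    rintro rfl
    simp [eq_comm (a := (0 : ℝ≥0∞)), h₁] at h
  have p₀ : 0 < q.toReal := ENNReal.toReal_pos (zero_lt_one.trans_le hq).ne' htop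
  have hr : 1 / q.toReal = 1 / q₁.toReal + 1 / q₂.toReal := by
    have := congrArg ENNReal.toReal h
    rwa [ENNReal.toReal_add (by simpa using n₁) (by simpa using n₂), ENNReal.toReal_div,
      ENNReal.toReal_div, ENNReal.toReal_div, ENNReal.toReal_one] at this
  have hlt : q.toReal < q₁.toReal :=
    lt_of_one_div_lt_one_div p₁ (hr ▸ lt_add_of_pos_right _ (by positivity))
  have := ENNReal.lintegral_Lp_mul_le_Lq_mul_Lr p₀ hlt hr Measure.count (f := a) (g := b)
    (measurable_of_countable _).aemeasurable (measurable_of_countable _).aemeasurable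
  simpa [lqNorm, h₁, h₂, htop, lintegral_count] using this

/-- **Young's inequality** `L¹ * Lᵖ → Lᵖ`. -/
lemma eLpNorm_convolution_le {n : ℕ} {p : ℝ≥0∞} (hp : 1 ≤ p)
    {K g : EuclideanSpace ℝ (Fin n) → ℂ} (hK : Continuous K) (hg : Continuous g) :
    eLpNorm (fun x => ∫ y, K (x - y) * g y) p volume
      ≤ (∫⁻ y, ‖K y‖ₑ) * eLpNorm g p volume := by
  have hKs := hK.stronglyMeasurable
  have hgs := hg.stronglyMeasurable
  set N := ∫⁻ y, ‖K y‖ₑ with hN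
  have hpt : ∀ x, ‖∫ y, K (x - y) * g y‖ₑ ≤ ∫⁻ y, ‖K (x - y)‖ₑ * ‖g y‖ₑ := fun x =>
    (enorm_integral_le_lintegral_enorm _).trans_eq (by simp_rw [enorm_mul])
  rcases eq_or_ne p ∞ with rfl | hp_top
  · simp only [eLpNorm_exponent_top]
    refine essSup_le_of_ae_le _ (.of_forall fun x => (hpt x).trans ?_)
    calc ∫⁻ y, ‖K (x - y)‖ₑ * ‖g y‖ₑ ≤ ∫⁻ y, ‖K (x - y)‖ₑ * eLpNormEssSup g volume := by
          refine lintegral_mono_ae ?_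
          filter_upwards [ae_le_eLpNormEssSup (f := g)] with y hy
          gcongr
      _ = N * eLpNormEssSup g volume := by
          rw [lintegral_mul_const _ (by fun_prop),
            lintegral_sub_left_eq_self (fun y => ‖K y‖ₑ) x]
  have hp0 : p ≠ 0 := (zero_lt_one.trans_le hp).ne'
  have hpr : 0 < p.toReal := ENNReal.toReal_pos hp0 hp_top
  have hp1 : 1 ≤ p.toReal := by
    simpa using ENNReal.toReal_mono hp_top hp
  set ν : Measure (EuclideanSpace ℝ (Fin n)) := volume.withDensity fun z => ‖K z‖ₑ with hν
  have hνuniv : ν Set.univ = N := by simp [hν, hN, withDensity_apply]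
  have hKm : Measurable fun z => ‖K z‖ₑ := by fun_prop
  have hJ : ∀ x, ‖∫ y, K (x - y) * g y‖ₑ
      ≤ (∫⁻ z, ‖g (x - z)‖ₑ ^ p.toReal ∂ν) ^ (1 / p.toReal) * N ^ (1 - 1 / p.toReal) := by
    intro x
    have h1 : ∫⁻ y, ‖K (x - y)‖ₑ * ‖g y‖ₑ = ∫⁻ z, ‖g (x - z)‖ₑ ∂ν := by
      rw [hν, lintegral_withDensity_eq_lintegral_mul _ hKm (by fun_prop),
        ← lintegral_sub_left_eq_self _ x]
      simp
    have h2 := eLpNorm'_le_eLpNorm'_mul_rpow_measure_univ (μ := ν) zero_lt_one hp1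
      (f := fun z => g (x - z)) (by fun_prop)
    simp only [eLpNorm', hνuniv, ENNReal.rpow_one, div_one] at h2
    exact (hpt x).trans (h1.trans_le h2)
  rw [eLpNorm_eq_lintegral_rpow_enorm_toReal hp0 hp_top,
    eLpNorm_eq_lintegral_rpow_enorm_toReal hp0 hp_top]
  calc (∫⁻ x, ‖∫ y, K (x - y) * g y‖ₑ ^ p.toReal) ^ (1 / p.toReal)
      ≤ (∫⁻ x, (∫⁻ z, ‖g (x - z)‖ₑ ^ p.toReal ∂ν)
          * (N ^ (1 - 1 / p.toReal)) ^ p.toReal) ^ (1 / p.toReal) := by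
        gcongr with x
        refine (ENNReal.rpow_le_rpow (hJ x) hpr.le).trans_eq ?_
        rw [ENNReal.mul_rpow_of_nonneg _ _ hpr.le, ← ENNReal.rpow_mul,
          one_div_mul_cancel hpr.ne', ENNReal.rpow_one]
    _ = (∫⁻ x, ∫⁻ z, ‖g (x - z)‖ₑ ^ p.toReal ∂ν) ^ (1 / p.toReal)
          * N ^ (1 - 1 / p.toReal) := by
        rw [lintegral_mul_const _ (Measurable.lintegral_prod_right (by fun_prop)),
          ENNReal.mul_rpow_of_nonneg _ _ (by positivity), ← ENNReal.rpow_mul,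
          mul_one_div_cancel hpr.ne', ENNReal.rpow_one]
    _ = ((∫⁻ x, ‖g x‖ₑ ^ p.toReal) * N) ^ (1 / p.toReal) * N ^ (1 - 1 / p.toReal) := by
        rw [lintegral_lintegral_swap (by fun_prop)]
        simp_rw [lintegral_sub_right_eq_self (fun x => ‖g x‖ₑ ^ p.toReal)]
        rw [lintegral_const, hνuniv]
    _ = N * (∫⁻ x, ‖g x‖ₑ ^ p.toReal) ^ (1 / p.toReal) := by
        have h3 : 0 ≤ 1 - 1 / p.toReal := by
          rw [sub_nonneg, div_le_one hpr]
          exact hp1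
        rw [ENNReal.mul_rpow_of_nonneg _ _ (by positivity), mul_assoc,
          ← ENNReal.rpow_add_of_nonneg _ _ (by positivity) h3, add_sub_cancel,
          ENNReal.rpow_one, mul_comm]

/-- The Fourier symbol `φ̂(·/2^k)` of the Littlewood–Paley block `Δ_k`. -/
def lpSymbol {n : ℕ} (χ : EuclideanSpace ℝ (Fin n) → ℝ) (k : ℤ)
    (ξ : EuclideanSpace ℝ (Fin n)) : ℂ :=
  ((χ ((2 : ℝ) ^ (-(k + 1)) • ξ) - χ ((2 : ℝ) ^ (-k) • ξ) : ℝ) : ℂ)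

/-- The convolution kernel of the Littlewood–Paley block `Δ_k`. -/
def lpKernel {n : ℕ} (χ : EuclideanSpace ℝ (Fin n) → ℝ) (k : ℤ) :
    EuclideanSpace ℝ (Fin n) → ℂ :=
  𝓕⁻ (lpSymbol χ k)

lemma norm_two_zpow_neg_smul {n : ℕ} (k : ℤ) (ξ : EuclideanSpace ℝ (Fin n)) :
    ‖(2 : ℝ) ^ (-k) • ξ‖ = ‖ξ‖ / 2 ^ k := by
  rw [norm_smul, norm_zpow, Real.norm_ofNat, zpow_neg, div_eq_inv_mul]

namespace IsLPCutoff

variable {n : ℕ} {χ : EuclideanSpace ℝ (Fin n) → ℝ}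

lemma lpSymbol_eq_zero_of_le (hχ : IsLPCutoff χ) {k : ℤ} {ξ : EuclideanSpace ℝ (Fin n)}
    (h : ‖ξ‖ ≤ 3 / 4 * 2 ^ k) : lpSymbol χ k ξ = 0 := by
  obtain ⟨-, -, -, -, -, h1, -⟩ := hχ
  have h2 : (0 : ℝ) < 2 ^ k := by positivity
  have h3 : (2 : ℝ) ^ (k + 1) = 2 ^ k * 2 := zpow_add_one₀ two_ne_zero k
  rw [lpSymbol, h1, h1, sub_self, ofReal_zero]
  · rw [norm_two_zpow_neg_smul, div_le_iff₀ h2]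
    exact h
  · rw [norm_two_zpow_neg_smul, div_le_iff₀ (by positivity), h3]
    linarith

lemma lpSymbol_eq_zero_of_lt (hχ : IsLPCutoff χ) {k : ℤ} {ξ : EuclideanSpace ℝ (Fin n)}
    (h : 8 / 3 * 2 ^ k < ‖ξ‖) : lpSymbol χ k ξ = 0 := by
  obtain ⟨-, -, -, -, -, -, h1⟩ := hχ
  have h2 : (0 : ℝ) < 2 ^ k := by positivity
  have h3 : (2 : ℝ) ^ (k + 1) = 2 ^ k * 2 := zpow_add_one₀ two_ne_zero k
  rw [lpSymbol, h1, h1, sub_self, ofReal_zero]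
  · rw [norm_two_zpow_neg_smul, lt_div_iff₀ h2]
    linarith
  · rw [norm_two_zpow_neg_smul, lt_div_iff₀ (by positivity), h3]
    linarith

lemma norm_lpSymbol_le (hχ : IsLPCutoff χ) (k : ℤ) (ξ : EuclideanSpace ℝ (Fin n)) :
    ‖lpSymbol χ k ξ‖ ≤ 1 := by
  obtain ⟨-, -, -, h0, h1, -, -⟩ := hχ
  rw [lpSymbol, Complex.norm_real, Real.norm_eq_abs, abs_le]
  constructor <;> linarith [h0 ((2 : ℝ) ^ (-(k + 1)) • ξ), h1 ((2 : ℝ) ^ (-(k + 1)) • ξ),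
    h0 ((2 : ℝ) ^ (-k) • ξ), h1 ((2 : ℝ) ^ (-k) • ξ)]

lemma contDiff_lpSymbol (hχ : IsLPCutoff χ) (k : ℤ) :
    ContDiff ℝ ((⊤ : ℕ∞) : WithTop ℕ∞) (lpSymbol χ k) := by
  have h := hχ.1
  refine Complex.ofRealCLM.contDiff.comp (ContDiff.sub ?_ ?_) <;>
    exact h.comp (contDiff_const_smul _)

lemma hasCompactSupport_lpSymbol (hχ : IsLPCutoff χ) (k : ℤ) :
    HasCompactSupport (lpSymbol χ k) :=
  HasCompactSupport.intro (isCompact_closedBall 0 (8 / 3 * 2 ^ k)) fun ξ hξ =>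
    hχ.lpSymbol_eq_zero_of_lt (by simpa using hξ)

lemma exists_schwartz_lpSymbol_mul (hχ : IsLPCutoff χ) (k : ℤ)
    (f : 𝓢(EuclideanSpace ℝ (Fin n), ℂ)) :
    ∃ U : 𝓢(EuclideanSpace ℝ (Fin n), ℂ), ∀ ξ, U ξ = lpSymbol χ k ξ * f ξ :=
  ⟨HasCompactSupport.toSchwartzMap (f := fun ξ => lpSymbol χ k ξ * f ξ)
    ((hχ.hasCompactSupport_lpSymbol k).mul_right)
    ((hχ.contDiff_lpSymbol k).mul (f.smooth ⊤)), fun _ => rfl⟩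

lemma exists_schwartz_lpKernel (hχ : IsLPCutoff χ) (k : ℤ) :
    ∃ K : 𝓢(EuclideanSpace ℝ (Fin n), ℂ), ⇑K = lpKernel χ k :=
  ⟨𝓕⁻ (HasCompactSupport.toSchwartzMap (hχ.hasCompactSupport_lpSymbol k)
    (hχ.contDiff_lpSymbol k)), by rw [SchwartzMap.fourierInv_coe]; rfl⟩

lemma continuous_lpKernel (hχ : IsLPCutoff χ) (k : ℤ) : Continuous (lpKernel χ k) := by
  obtain ⟨K, hK⟩ := hχ.exists_schwartz_lpKernel k
  exact hK ▸ K.continuous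

lemma integrable_lpSymbol (hχ : IsLPCutoff χ) (k : ℤ) : Integrable (lpSymbol χ k) :=
  (hχ.contDiff_lpSymbol k).continuous.integrable_of_hasCompactSupport
    (hχ.hasCompactSupport_lpSymbol k)

lemma integrable_lpKernel (hχ : IsLPCutoff χ) (k : ℤ) : Integrable (lpKernel χ k) := by
  obtain ⟨K, hK⟩ := hχ.exists_schwartz_lpKernel k
  exact hK ▸ K.integrable

lemma exists_enorm_lpKernel_le (hχ : IsLPCutoff χ) (k : ℤ) :
    ∃ B : ℝ≥0∞, B ≠ ∞ ∧ ∀ x, ‖lpKernel χ k x‖ₑ ≤ B := by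
  refine ⟨∫⁻ ξ, ‖lpSymbol χ k ξ‖ₑ, (hχ.integrable_lpSymbol k).2.ne, fun x => ?_⟩
  rw [lpKernel, Real.fourierInv_eq]
  refine (enorm_integral_le_lintegral_enorm _).trans_eq ?_
  simp_rw [← ofReal_norm, Circle.norm_smul]

lemma lpKernel_eq_dilation (k : ℤ) (x : EuclideanSpace ℝ (Fin n)) :
    lpKernel χ k x = ((2 : ℝ) ^ k) ^ n • lpKernel χ 0 ((2 : ℝ) ^ k • x) := by
  have h2 : (0 : ℝ) < 2 ^ k := by positivity
  have hsym : ∀ ξ, lpSymbol χ k ((2 : ℝ) ^ k • ξ) = lpSymbol χ 0 ξ := fun ξ => by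
    simp only [lpSymbol, smul_smul]
    rw [← zpow_add₀ two_ne_zero, ← zpow_add₀ two_ne_zero]
    congr 6 <;> ring_nf
  simp only [lpKernel, Real.fourierInv_eq]
  have := Measure.integral_comp_smul (volume : Measure (EuclideanSpace ℝ (Fin n)))
    (fun ξ => 𝐞 (inner ℝ ξ x) • lpSymbol χ k ξ) ((2 : ℝ) ^ k)
  rw [finrank_euclideanSpace_fin, abs_of_pos (by positivity), eq_inv_smul_iff₀ (by positivity)]
    at this
  rw [← this]
  simp only [hsym, inner_smul_left, inner_smul_right]
  simp

lemma lintegral_enorm_lpKernel (hχ : IsLPCutoff χ) (k : ℤ) :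
    ∫⁻ x, ‖lpKernel χ k x‖ₑ = ∫⁻ x, ‖lpKernel χ 0 x‖ₑ := by
  have h2 : (0 : ℝ) < 2 ^ k := by positivity
  rw [← ofReal_integral_norm_eq_lintegral_enorm (hχ.integrable_lpKernel k),
    ← ofReal_integral_norm_eq_lintegral_enorm (hχ.integrable_lpKernel 0)]
  congr 1
  have := Measure.integral_comp_smul (volume : Measure (EuclideanSpace ℝ (Fin n)))
    (fun x => ‖lpKernel χ 0 x‖) ((2 : ℝ) ^ k)
  rw [finrank_euclideanSpace_fin, abs_of_pos (by positivity), eq_inv_smul_iff₀ (by positivity)]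
    at this
  rw [← this, ← integral_smul]
  refine integral_congr_ae (.of_forall fun x => ?_)
  simp only [lpKernel_eq_dilation k x, norm_smul, norm_pow, Real.norm_of_nonneg h2.le,
    smul_eq_mul]

lemma Dproj_eq_convolution (hχ : IsLPCutoff χ) (k : ℤ)
    {g : EuclideanSpace ℝ (Fin n) → ℂ} (hg : Integrable g) (x : EuclideanSpace ℝ (Fin n)) :
    Dproj χ k g x = ∫ y, lpKernel χ k (x - y) * g y := by
  have hm := hχ.integrable_lpSymbol k
  have hInt : Integrable fun ξ => 𝐞 (inner ℝ ξ x) • lpSymbol χ k ξ := by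
    refine hm.mono ?_ (.of_forall fun ξ => by rw [Circle.norm_smul])
    have : Continuous (lpSymbol χ k) := (hχ.contDiff_lpSymbol k).continuous
    have h' : Continuous fun ξ : EuclideanSpace ℝ (Fin n) => 𝐞 (inner ℝ ξ x) :=
      Real.continuous_fourierChar.comp (by fun_prop)
    exact (h'.smul this).aestronglyMeasurable
  have h := VectorFourier.integral_fourierIntegral_smul_eq_flip (L := innerₗ _)
    Real.continuous_fourierChar continuous_inner hInt hg
  have hker : ∀ y, VectorFourier.fourierIntegral 𝐞 volume (innerₗ _)
      (fun ξ => 𝐞 (inner ℝ ξ x) • lpSymbol χ k ξ) y = lpKernel χ k (x - y) := fun y => by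
    rw [lpKernel, Real.fourierInv_eq, VectorFourier.fourierIntegral]
    refine integral_congr_ae (.of_forall fun ξ => ?_)
    simp only [innerₗ_apply_apply, smul_smul, inner_sub_right]
    rw [← AddChar.map_add_eq_mul, neg_add_eq_sub]
  simp only [hker, smul_eq_mul, flip_innerₗ] at h
  rw [h, Dproj, Real.fourierInv_eq]
  refine integral_congr_ae (.of_forall fun ξ => ?_)
  simp only [← smul_mul_assoc]
  rfl

/-- The blocks `Δ_k` are bounded on every `Lᵖ`, uniformly in `k`. -/
lemma eLpNorm_Dproj_le (hχ : IsLPCutoff χ) (k : ℤ) {p : ℝ≥0∞} (hp : 1 ≤ p)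
    {g : EuclideanSpace ℝ (Fin n) → ℂ} (hg : Integrable g) (hgc : Continuous g) :
    eLpNorm (Dproj χ k g) p volume
      ≤ (∫⁻ x, ‖lpKernel χ 0 x‖ₑ) * eLpNorm g p volume := by
  rw [show Dproj χ k g = _ from funext fun x => hχ.Dproj_eq_convolution k hg x,
    ← hχ.lintegral_enorm_lpKernel k]
  exact eLpNorm_convolution_le hp (hχ.continuous_lpKernel k) hgc

lemma exists_schwartz_Dproj (hχ : IsLPCutoff χ) (k : ℤ)
    (f : 𝓢(EuclideanSpace ℝ (Fin n), ℂ)) :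
    ∃ U : 𝓢(EuclideanSpace ℝ (Fin n), ℂ), (∀ ξ, U ξ = lpSymbol χ k ξ * 𝓕 f ξ) ∧
      Dproj χ k f = ⇑(𝓕⁻ U : 𝓢(EuclideanSpace ℝ (Fin n), ℂ)) := by
  obtain ⟨U, hU⟩ := hχ.exists_schwartz_lpSymbol_mul k (𝓕 f)
  refine ⟨U, hU, ?_⟩
  rw [SchwartzMap.fourierInv_coe, show ⇑U = _ from funext hU]
  rfl

lemma _root_.fourier_fourierInv_mul_fourierInv (U V : 𝓢(EuclideanSpace ℝ (Fin n), ℂ))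
    (ξ : EuclideanSpace ℝ (Fin n)) :
    𝓕 (fun x => (𝓕⁻ U : 𝓢(EuclideanSpace ℝ (Fin n), ℂ)) x
      * (𝓕⁻ V : 𝓢(EuclideanSpace ℝ (Fin n), ℂ)) x) ξ = ∫ η, U η * V (ξ - η) := by
  set v : 𝓢(EuclideanSpace ℝ (Fin n), ℂ) := 𝓕⁻ V with hv
  have hInt : Integrable fun x => 𝐞 (-inner ℝ x ξ) • v x := by
    refine v.integrable.mono ?_ (.of_forall fun x => by rw [Circle.norm_smul])
    have h' : Continuous fun x : EuclideanSpace ℝ (Fin n) => 𝐞 (-inner ℝ x ξ) :=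
      Real.continuous_fourierChar.comp (by fun_prop)
    exact (h'.smul v.continuous).aestronglyMeasurable
  have h := VectorFourier.integral_fourierIntegral_smul_eq_flip
    (L := -innerₗ (EuclideanSpace ℝ (Fin n))) Real.continuous_fourierChar
    (by simp only [LinearMap.neg_apply, innerₗ_apply_apply]; fun_prop)
    (U.integrable (μ := volume)) hInt
  have hV : ∀ η, VectorFourier.fourierIntegral 𝐞 volume (-innerₗ _).flip
      (fun x => 𝐞 (-inner ℝ x ξ) • v x) η = V (ξ - η) := fun η => by
    have hFv : 𝓕 v = V := by rw [hv, FourierTransform.fourier_fourierInv_eq]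
    rw [← hFv, SchwartzMap.fourier_coe, Real.fourier_eq, VectorFourier.fourierIntegral]
    refine integral_congr_ae (.of_forall fun x => ?_)
    simp only [LinearMap.flip_apply, LinearMap.neg_apply, innerₗ_apply_apply, neg_neg,
      smul_smul, inner_sub_right]
    rw [← AddChar.map_add_eq_mul, neg_sub, real_inner_comm, sub_eq_add_neg]
  simp only [hV, smul_eq_mul] at h
  rw [← h, Real.fourier_eq]
  refine integral_congr_ae (.of_forall fun x => ?_)
  simp only [mul_smul_comm, SchwartzMap.fourierInv_coe]
  rfl

/-- The product of two neighbouring blocks `Δ_i f₁` and `Δ_j f₂` has no frequencies of order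
much larger than `2^i`. -/
lemma Dproj_mul_eq_zero (hχ : IsLPCutoff χ) {i j k : ℤ} (hij : |i - j| ≤ 1) (hk : i + 3 < k)
    (f₁ f₂ : 𝓢(EuclideanSpace ℝ (Fin n), ℂ)) :
    Dproj χ k (fun x => Dproj χ i f₁ x * Dproj χ j f₂ x) = 0 := by
  obtain ⟨U, hU, hU'⟩ := hχ.exists_schwartz_Dproj i f₁
  obtain ⟨V, hV, hV'⟩ := hχ.exists_schwartz_Dproj j f₂
  have hj : (2 : ℝ) ^ j ≤ 2 * 2 ^ i := by
    rw [← zpow_one_add₀ two_ne_zero]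
    exact zpow_le_zpow_right₀ one_le_two (by rw [abs_le] at hij; omega)
  have hk' : 16 * (2 : ℝ) ^ i ≤ 2 ^ k := by
    have : (16 : ℝ) = 2 ^ (4 : ℤ) := by norm_num
    rw [this, ← zpow_add₀ two_ne_zero]
    exact zpow_le_zpow_right₀ one_le_two (by omega)
  have hi : (0 : ℝ) < 2 ^ i := by positivity
  have hzero : ∀ ξ, lpSymbol χ k ξ * 𝓕 (fun x => Dproj χ i f₁ x * Dproj χ j f₂ x) ξ = 0 := by
    intro ξ
    rcases le_or_gt ‖ξ‖ (3 / 4 * 2 ^ k) with h | h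
    · rw [hχ.lpSymbol_eq_zero_of_le h, zero_mul]
    rw [hU', hV', fourier_fourierInv_mul_fourierInv, mul_eq_zero]
    right
    refine integral_eq_zero_of_ae (.of_forall fun η => ?_)
    simp only [hU, hV]
    rcases lt_or_ge (8 / 3 * 2 ^ i) ‖η‖ with h1 | h1
    · simp [hχ.lpSymbol_eq_zero_of_lt h1]
    · have h2 : 8 / 3 * 2 ^ j < ‖ξ - η‖ := by
        have := norm_sub_norm_le ξ η
        linarith
      simp [hχ.lpSymbol_eq_zero_of_lt h2]
  ext x
  change 𝓕⁻ (fun ξ => lpSymbol χ k ξ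
    * 𝓕 (fun x => Dproj χ i f₁ x * Dproj χ j f₂ x) ξ) x = 0
  simp [hzero, Real.fourierInv_eq]

lemma enorm_Dproj_le (k : ℤ) (f : EuclideanSpace ℝ (Fin n) → ℂ)
    (x : EuclideanSpace ℝ (Fin n)) :
    ‖Dproj χ k f x‖ₑ ≤ ∫⁻ ξ, ‖lpSymbol χ k ξ * 𝓕 f ξ‖ₑ := by
  rw [Dproj, Real.fourierInv_eq]
  refine (enorm_integral_le_lintegral_enorm _).trans_eq ?_
  simp_rw [← ofReal_norm, Circle.norm_smul]
  rfl

/-- The supports of the symbols overlap finitely often. -/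
lemma tsum_enorm_lpSymbol_le (hχ : IsLPCutoff χ) (ξ : EuclideanSpace ℝ (Fin n)) :
    ∑' k, ‖lpSymbol χ k ξ‖ₑ ≤ 3 := by
  rcases eq_or_ne ξ 0 with rfl | hξ
  · have : ∀ k, lpSymbol χ k 0 = 0 := fun k => hχ.lpSymbol_eq_zero_of_le (by simp; positivity)
    simp [this]
  obtain ⟨m, hm1, hm2⟩ := exists_mem_Ico_zpow (norm_pos_iff.2 hξ) one_lt_two
  have hm : (2 : ℝ) ^ (m + 1) = 2 ^ m * 2 := zpow_add_one₀ two_ne_zero m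
  have hm0 : (0 : ℝ) < 2 ^ m := by positivity
  rw [tsum_eq_sum (s := Finset.Icc (m - 1) (m + 1))]
  · refine (Finset.sum_le_card_nsmul _ _ 1 fun k _ => ?_).trans_eq ?_
    · rw [← ofReal_norm]
      exact ENNReal.ofReal_le_one.2 (hχ.norm_lpSymbol_le k ξ)
    · rw [Int.card_Icc, show m + 1 + 1 - (m - 1) = 3 by ring]
      simp
  · intro k hk
    rw [enorm_eq_zero]
    rw [Finset.mem_Icc, not_and_or, not_le, not_le] at hk
    rcases hk with hk | hk
    · apply hχ.lpSymbol_eq_zero_of_lt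
      have h4 : (2 : ℝ) ^ (k + 2) ≤ 2 ^ m := zpow_le_zpow_right₀ one_le_two (by omega)
      rw [zpow_add₀ two_ne_zero] at h4
      have hk0 : (0 : ℝ) < 2 ^ k := by positivity
      norm_num at h4
      linarith
    · apply hχ.lpSymbol_eq_zero_of_le
      have h4 : (2 : ℝ) ^ (m + 2) ≤ 2 ^ k := zpow_le_zpow_right₀ one_le_two (by omega)
      rw [zpow_add₀ two_ne_zero] at h4
      norm_num at h4
      linarith

lemma tsum_lintegral_lpSymbol_mul_ne_top (hχ : IsLPCutoff χ)
    (f : 𝓢(EuclideanSpace ℝ (Fin n), ℂ)) :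
    ∑' k, ∫⁻ ξ, ‖lpSymbol χ k ξ * 𝓕 (f : EuclideanSpace ℝ (Fin n) → ℂ) ξ‖ₑ ≠ ∞ := by
  have hcont : ∀ k, Continuous fun ξ => lpSymbol χ k ξ * 𝓕 f ξ := fun k =>
    (hχ.contDiff_lpSymbol k).continuous.mul (𝓕 f).continuous
  rw [← SchwartzMap.fourier_coe, ← lintegral_tsum fun k => (hcont k).enorm.aemeasurable]
  refine ne_top_of_le_ne_top
    (ENNReal.mul_ne_top (by simp : (3 : ℝ≥0∞) ≠ ∞)
      ((𝓕 f).integrable (μ := volume)).2.ne) ?_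
  rw [← lintegral_const_mul _ (𝓕 f).continuous.enorm.measurable]
  refine lintegral_mono fun ξ => ?_
  simp_rw [enorm_mul]
  rw [ENNReal.tsum_mul_right]
  gcongr
  exact hχ.tsum_enorm_lpSymbol_le ξ

/-- The summand `(Δ_i f₁)(Δ_j f₂)`, restricted to `|i - j| ≤ 1`, of the remainder series. -/
def _root_.remainderTerm (χ : EuclideanSpace ℝ (Fin n) → ℝ)
    (f₁ f₂ : 𝓢(EuclideanSpace ℝ (Fin n), ℂ)) (ij : ℤ × ℤ) (x : EuclideanSpace ℝ (Fin n)) : ℂ :=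
  if |ij.1 - ij.2| ≤ 1 then Dproj χ ij.1 (⇑f₁) x * Dproj χ ij.2 (⇑f₂) x else 0

lemma exists_schwartz_remainderTerm (hχ : IsLPCutoff χ)
    (f₁ f₂ : 𝓢(EuclideanSpace ℝ (Fin n), ℂ)) (ij : ℤ × ℤ) :
    ∃ W : 𝓢(EuclideanSpace ℝ (Fin n), ℂ), ⇑W = remainderTerm χ f₁ f₂ ij := by
  obtain ⟨U, -, hU⟩ := hχ.exists_schwartz_Dproj ij.1 f₁
  obtain ⟨V, -, hV⟩ := hχ.exists_schwartz_Dproj ij.2 f₂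
  by_cases h : |ij.1 - ij.2| ≤ 1
  · refine ⟨SchwartzMap.pairing (ContinuousLinearMap.mul ℂ ℂ) (𝓕⁻ U) (𝓕⁻ V), ?_⟩
    ext x
    simp [remainderTerm, h, hU, hV]
  · refine ⟨0, ?_⟩
    ext x
    simp [remainderTerm, h]

lemma enorm_remainderTerm_le (f₁ f₂ : 𝓢(EuclideanSpace ℝ (Fin n), ℂ)) (ij : ℤ × ℤ)
    (x : EuclideanSpace ℝ (Fin n)) :
    ‖remainderTerm χ f₁ f₂ ij x‖ₑ ≤ (∫⁻ ξ, ‖lpSymbol χ ij.1 ξ * 𝓕 ⇑f₁ ξ‖ₑ)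
      * ∫⁻ ξ, ‖lpSymbol χ ij.2 ξ * 𝓕 ⇑f₂ ξ‖ₑ := by
  rw [remainderTerm]
  split_ifs
  · rw [enorm_mul]
    gcongr <;> exact enorm_Dproj_le _ _ _
  · simp

lemma tsum_lintegral_mul_lintegral_ne_top (hχ : IsLPCutoff χ)
    (f₁ f₂ : 𝓢(EuclideanSpace ℝ (Fin n), ℂ)) :
    ∑' ij : ℤ × ℤ, (∫⁻ ξ, ‖lpSymbol χ ij.1 ξ * 𝓕 ⇑f₁ ξ‖ₑ)
      * ∫⁻ ξ, ‖lpSymbol χ ij.2 ξ * 𝓕 ⇑f₂ ξ‖ₑ ≠ ∞ := by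
  rw [ENNReal.tsum_prod' (f := fun ij : ℤ × ℤ => (∫⁻ ξ, ‖lpSymbol χ ij.1 ξ * 𝓕 ⇑f₁ ξ‖ₑ)
      * ∫⁻ ξ, ‖lpSymbol χ ij.2 ξ * 𝓕 ⇑f₂ ξ‖ₑ)]
  simp_rw [ENNReal.tsum_mul_left, ENNReal.tsum_mul_right]
  exact ENNReal.mul_ne_top (hχ.tsum_lintegral_lpSymbol_mul_ne_top f₁)
    (hχ.tsum_lintegral_lpSymbol_mul_ne_top f₂)

lemma summable_remainderTerm (hχ : IsLPCutoff χ) (f₁ f₂ : 𝓢(EuclideanSpace ℝ (Fin n), ℂ))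
    (x : EuclideanSpace ℝ (Fin n)) : Summable fun ij => remainderTerm χ f₁ f₂ ij x := by
  refine Summable.of_norm (tsum_enorm_ne_top_iff_summable_norm.1 ?_)
  exact ne_top_of_le_ne_top (hχ.tsum_lintegral_mul_lintegral_ne_top f₁ f₂)
    (ENNReal.tsum_le_tsum fun ij => enorm_remainderTerm_le f₁ f₂ ij x)

lemma summable_integral_remainderTerm_mul (hχ : IsLPCutoff χ)
    (f₁ f₂ g : 𝓢(EuclideanSpace ℝ (Fin n), ℂ)) :
    Summable fun ij => ∫ x, remainderTerm χ f₁ f₂ ij x * g x := by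
  refine Summable.of_norm (tsum_enorm_ne_top_iff_summable_norm.1 ?_)
  refine ne_top_of_le_ne_top (ENNReal.mul_ne_top
    (hχ.tsum_lintegral_mul_lintegral_ne_top f₁ f₂) (g.integrable (μ := volume)).2.ne) ?_
  rw [← ENNReal.tsum_mul_right]
  refine ENNReal.tsum_le_tsum fun ij => (enorm_integral_le_lintegral_enorm _).trans ?_
  rw [← lintegral_const_mul _ g.continuous.enorm.measurable]
  refine lintegral_mono fun x => ?_
  rw [enorm_mul]
  gcongr
  exact enorm_remainderTerm_le f₁ f₂ ij x

lemma _root_.tsum_ite_abs_sub_le_one (i : ℤ) (c : ℝ≥0∞) :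
    ∑' j : ℤ, (if |i - j| ≤ 1 then c else 0) = 3 * c := by
  rw [tsum_eq_sum (s := Finset.Icc (i - 1) (i + 1))]
  · rw [Finset.sum_congr rfl (g := fun _ => c)]
    · rw [Finset.sum_const, Int.card_Icc, show i + 1 + 1 - (i - 1) = 3 by ring]
      simp
    · intro j hj
      rw [Finset.mem_Icc] at hj
      rw [if_pos (by rw [abs_le]; omega)]
  · intro j hj
    rw [Finset.mem_Icc] at hj
    rw [if_neg (by rw [abs_le]; omega)]

lemma tsum_lintegral_remainderTerm_ne_top (hχ : IsLPCutoff χ)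
    (f₁ f₂ : 𝓢(EuclideanSpace ℝ (Fin n), ℂ)) :
    ∑' ij, ∫⁻ x, ‖remainderTerm χ f₁ f₂ ij x‖ₑ ≠ ∞ := by
  set A := ∫⁻ x, ‖lpKernel χ 0 x‖ₑ
  set M := A * eLpNorm f₂ 1 volume
  have hM : M ≠ ∞ := ENNReal.mul_ne_top (hχ.integrable_lpKernel 0).2.ne
    (f₂.memLp 1 volume).2.ne
  have hterm : ∀ i j, ∫⁻ x, ‖remainderTerm χ f₁ f₂ (i, j) x‖ₑ
      ≤ if |i - j| ≤ 1 then (∫⁻ ξ, ‖lpSymbol χ i ξ * 𝓕 ⇑f₁ ξ‖ₑ) * M else 0 := by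
    intro i j
    simp only [remainderTerm]
    split_ifs
    · calc ∫⁻ x, ‖Dproj χ i f₁ x * Dproj χ j f₂ x‖ₑ
          ≤ ∫⁻ x, (∫⁻ ξ, ‖lpSymbol χ i ξ * 𝓕 ⇑f₁ ξ‖ₑ) * ‖Dproj χ j f₂ x‖ₑ := by
            refine lintegral_mono fun x => ?_
            rw [enorm_mul]
            gcongr
            exact enorm_Dproj_le _ _ _
        _ = (∫⁻ ξ, ‖lpSymbol χ i ξ * 𝓕 ⇑f₁ ξ‖ₑ) * eLpNorm (Dproj χ j f₂) 1 volume := by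
            obtain ⟨V, -, hV⟩ := hχ.exists_schwartz_Dproj j f₂
            rw [eLpNorm_one_eq_lintegral_enorm, hV,
              lintegral_const_mul _ (SchwartzMap.continuous _).enorm.measurable]
        _ ≤ _ := by
            gcongr
            exact hχ.eLpNorm_Dproj_le j le_rfl f₂.integrable f₂.continuous
    · simp
  rw [ENNReal.tsum_prod' (f := fun ij : ℤ × ℤ => ∫⁻ x, ‖remainderTerm χ f₁ f₂ ij x‖ₑ)]
  refine ne_top_of_le_ne_top ?_
    (ENNReal.tsum_le_tsum fun i => ENNReal.tsum_le_tsum fun j => hterm i j)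
  simp_rw [tsum_ite_abs_sub_le_one]
  rw [ENNReal.tsum_mul_left, ENNReal.tsum_mul_right]
  exact ENNReal.mul_ne_top (by simp)
    (ENNReal.mul_ne_top (hχ.tsum_lintegral_lpSymbol_mul_ne_top f₁) hM)

lemma integrable_tsum_remainderTerm (hχ : IsLPCutoff χ)
    (f₁ f₂ : 𝓢(EuclideanSpace ℝ (Fin n), ℂ)) :
    Integrable fun x => ∑' ij, remainderTerm χ f₁ f₂ ij x := by
  have hcont : ∀ ij, Continuous (remainderTerm χ f₁ f₂ ij) := fun ij => by
    obtain ⟨W, hW⟩ := hχ.exists_schwartz_remainderTerm f₁ f₂ ij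
    exact hW ▸ W.continuous
  constructor
  · exact aestronglyMeasurable_of_tendsto_ae atTop
      (f := fun (s : Finset (ℤ × ℤ)) x => ∑ ij ∈ s, remainderTerm χ f₁ f₂ ij x)
      (fun s => (continuous_finsetSum s fun ij _ => hcont ij).aestronglyMeasurable)
      (.of_forall fun x => (hχ.summable_remainderTerm f₁ f₂ x).hasSum)
  · refine lt_of_le_of_lt (lintegral_mono fun x => enorm_tsum_le_tsum_enorm) ?_
    rw [lintegral_tsum fun ij => (hcont ij).enorm.aemeasurable]
    exact (hχ.tsum_lintegral_remainderTerm_ne_top f₁ f₂).lt_top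

lemma Dproj_tsum_remainderTerm (hχ : IsLPCutoff χ) (k : ℤ)
    (f₁ f₂ : 𝓢(EuclideanSpace ℝ (Fin n), ℂ)) (x : EuclideanSpace ℝ (Fin n)) :
    Dproj χ k (fun x => ∑' ij, remainderTerm χ f₁ f₂ ij x) x
      = ∑' ij, Dproj χ k (remainderTerm χ f₁ f₂ ij) x := by
  have hW := hχ.exists_schwartz_remainderTerm f₁ f₂
  have hcont : ∀ ij, Continuous (remainderTerm χ f₁ f₂ ij) := fun ij => by
    obtain ⟨W, hW⟩ := hW ij
    exact hW ▸ W.continuous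
  have hInt : ∀ ij, Integrable (remainderTerm χ f₁ f₂ ij) := fun ij => by
    obtain ⟨W, hW⟩ := hW ij
    exact hW ▸ W.integrable
  obtain ⟨B, hB, hKB⟩ := hχ.exists_enorm_lpKernel_le k
  rw [hχ.Dproj_eq_convolution k (hχ.integrable_tsum_remainderTerm f₁ f₂)]
  simp_rw [hχ.Dproj_eq_convolution k (hInt _), ← tsum_mul_left]
  refine integral_tsum (fun ij => ?_) ?_
  · exact (((hχ.continuous_lpKernel k).comp (continuous_sub_left x)).mul
      (hcont ij)).aestronglyMeasurable
  · refine ne_top_of_le_ne_top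
      (ENNReal.mul_ne_top hB (hχ.tsum_lintegral_remainderTerm_ne_top f₁ f₂)) ?_
    rw [← ENNReal.tsum_mul_left]
    refine ENNReal.tsum_le_tsum fun ij => ?_
    rw [← lintegral_const_mul _ (hcont ij).enorm.measurable]
    refine lintegral_mono fun y => ?_
    rw [enorm_mul]
    gcongr
    exact hKB _

lemma _root_.eLpNorm_mul_le_of_continuous {u v : EuclideanSpace ℝ (Fin n) → ℂ}
    {p p₁ p₂ : ℝ≥0∞} [ENNReal.HolderTriple p₁ p₂ p] (hu : Continuous u) (hv : Continuous v) :
    eLpNorm (fun x => u x * v x) p volume ≤ eLpNorm u p₁ volume * eLpNorm v p₂ volume := by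
  simpa using eLpNorm_le_eLpNorm_mul_eLpNorm_of_nnnorm (μ := volume) (p := p₁) (q := p₂) (r := p)
    hu.aestronglyMeasurable hv.aestronglyMeasurable (· * ·) 1 (.of_forall fun x => by simp)

lemma eLpNorm_Dproj_remainderTerm_le (hχ : IsLPCutoff χ) {p p₁ p₂ : ℝ≥0∞} (hp : 1 ≤ p)
    (hp12 : 1 / p = 1 / p₁ + 1 / p₂) (k : ℤ) (f₁ f₂ : 𝓢(EuclideanSpace ℝ (Fin n), ℂ))
    (ij : ℤ × ℤ) :
    eLpNorm (Dproj χ k (remainderTerm χ f₁ f₂ ij)) p volume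
      ≤ if |ij.1 - ij.2| ≤ 1 ∧ k ≤ ij.1 + 3 then (∫⁻ x, ‖lpKernel χ 0 x‖ₑ) *
        (eLpNorm (Dproj χ ij.1 f₁) p₁ volume * eLpNorm (Dproj χ ij.2 f₂) p₂ volume) else 0 := by
  have : ENNReal.HolderTriple p₁ p₂ p := ⟨by simpa using hp12.symm⟩
  obtain ⟨W, hW⟩ := hχ.exists_schwartz_remainderTerm f₁ f₂ ij
  by_cases h : |ij.1 - ij.2| ≤ 1
  · have ht : remainderTerm χ f₁ f₂ ij = fun x => Dproj χ ij.1 f₁ x * Dproj χ ij.2 f₂ x := by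
      ext x
      simp [remainderTerm, h]
    by_cases hk : k ≤ ij.1 + 3
    · rw [if_pos ⟨h, hk⟩]
      refine (hχ.eLpNorm_Dproj_le k hp (hW ▸ W.integrable) (hW ▸ W.continuous)).trans ?_
      gcongr
      obtain ⟨U, -, hU⟩ := hχ.exists_schwartz_Dproj ij.1 f₁
      obtain ⟨V, -, hV⟩ := hχ.exists_schwartz_Dproj ij.2 f₂
      rw [ht]
      exact eLpNorm_mul_le_of_continuous (hU ▸ SchwartzMap.continuous _)
        (hV ▸ SchwartzMap.continuous _)
    · rw [ht, hχ.Dproj_mul_eq_zero h (not_le.1 hk)]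
      simp
  · have ht : remainderTerm χ f₁ f₂ ij = fun _ => 0 := by
      ext x
      simp [remainderTerm, h]
    refine (hχ.eLpNorm_Dproj_le k hp (hW ▸ W.integrable) (hW ▸ W.continuous)).trans ?_
    simp [ht]

lemma eLpNorm_Dproj_tsum_remainderTerm_le (hχ : IsLPCutoff χ) {p p₁ p₂ : ℝ≥0∞} (hp : 1 ≤ p)
    (hp12 : 1 / p = 1 / p₁ + 1 / p₂) (k : ℤ) (f₁ f₂ : 𝓢(EuclideanSpace ℝ (Fin n), ℂ)) :
    eLpNorm (Dproj χ k fun x => ∑' ij, remainderTerm χ f₁ f₂ ij x) p volume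
      ≤ ∑' ij : ℤ × ℤ, if |ij.1 - ij.2| ≤ 1 ∧ k ≤ ij.1 + 3 then (∫⁻ x, ‖lpKernel χ 0 x‖ₑ) *
        (eLpNorm (Dproj χ ij.1 f₁) p₁ volume * eLpNorm (Dproj χ ij.2 f₂) p₂ volume) else 0 := by
  calc eLpNorm (Dproj χ k fun x => ∑' ij, remainderTerm χ f₁ f₂ ij x) p volume
      ≤ eLpNorm (fun x => ∑' ij, ‖Dproj χ k (remainderTerm χ f₁ f₂ ij) x‖ₑ) p volume := by
        refine eLpNorm_mono_enorm fun x => ?_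
        rw [hχ.Dproj_tsum_remainderTerm, enorm_eq_self]
        exact enorm_tsum_le_tsum_enorm
    _ ≤ ∑' ij, eLpNorm (fun x => ‖Dproj χ k (remainderTerm χ f₁ f₂ ij) x‖ₑ) p volume := by
        refine eLpNorm_tsum_le hp fun ij => ?_
        obtain ⟨W, hW⟩ := hχ.exists_schwartz_remainderTerm f₁ f₂ ij
        obtain ⟨V, -, hV⟩ := hχ.exists_schwartz_Dproj k W
        rw [← hW, hV]
        exact (SchwartzMap.continuous _).enorm.aemeasurable
    _ ≤ _ := ENNReal.tsum_le_tsum fun ij => by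
        simpa only [eLpNorm_enorm] using hχ.eLpNorm_Dproj_remainderTerm_le hp hp12 k f₁ f₂ ij

end IsLPCutoff

lemma tsum_two_rpow_neg_mul_ne_top {s : ℝ} (hs : 0 < s) :
    ∑' m : ℤ, (if -3 ≤ m then (2 : ℝ≥0∞) ^ (-(m : ℝ) * s) else 0) ≠ ∞ := by
  have hinj : Injective fun k : ℕ => (k : ℤ) - 3 := fun a b h => by
    simpa using h
  rw [← hinj.tsum_eq]
  · have hterm : ∀ k : ℕ, (if -3 ≤ (k : ℤ) - 3 then
        (2 : ℝ≥0∞) ^ (-(((k : ℤ) - 3 : ℤ) : ℝ) * s) else 0)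
        = (2 : ℝ≥0∞) ^ (3 * s) * ((2 : ℝ≥0∞) ^ (-s)) ^ k := by
      intro k
      rw [if_pos (by omega), ← ENNReal.rpow_natCast, ← ENNReal.rpow_mul,
        ← ENNReal.rpow_add _ _ (by simp) (by simp)]
      congr 1
      push_cast
      ring
    simp_rw [hterm]
    rw [ENNReal.tsum_mul_left, ENNReal.tsum_geometric]
    refine ENNReal.mul_ne_top (ENNReal.rpow_ne_top_of_nonneg (by positivity) (by simp)) ?_
    rw [ENNReal.inv_ne_top, Ne, tsub_eq_zero_iff_le, not_le]
    exact ENNReal.rpow_lt_one_of_one_lt_of_neg (by simp) (by linarith)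
  · intro m hm
    rw [mem_support, ne_eq, ite_eq_right_iff, Classical.not_imp] at hm
    exact ⟨(m + 3).toNat, by simp only; omega⟩

lemma tsum_two_rpow_mul_ne_top (α : ℝ) :
    ∑' l : ℤ, (if |l| ≤ 1 then (2 : ℝ≥0∞) ^ ((l : ℝ) * α) else 0) ≠ ∞ := by
  rw [tsum_eq_sum (s := Finset.Icc (-1) 1)]
  · refine ENNReal.sum_ne_top.2 fun l _ => ?_
    split_ifs
    · exact ENNReal.rpow_ne_top_of_ne_zero (by simp) (by simp)
    · simp
  · intro l hl
    rw [Finset.mem_Icc] at hl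
    rw [if_neg (by rw [abs_le]; omega)]

/-- The discrete convolution estimate behind the remainder bound: summing `a i * b j` over the
near-diagonal indices `i ≥ k - 3` is bounded from weighted `ℓ^q₁ × ℓ^q₂` to weighted `ℓ^q`. -/
lemma lqNorm_tsum_near_diagonal_le {q q₁ q₂ : ℝ≥0∞} (hq : 1 ≤ q) (hq₁ : 1 ≤ q₁) (hq₂ : 1 ≤ q₂)
    (hq12 : 1 / q = 1 / q₁ + 1 / q₂) (s α : ℝ) (a b : ℤ → ℝ≥0∞) :
    lqNorm q (fun k => (2 : ℝ≥0∞) ^ ((k : ℝ) * s) *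
        ∑' ij : ℤ × ℤ, if |ij.1 - ij.2| ≤ 1 ∧ k ≤ ij.1 + 3 then a ij.1 * b ij.2 else 0)
      ≤ (∑' m : ℤ, (if -3 ≤ m then (2 : ℝ≥0∞) ^ (-(m : ℝ) * s) else 0)) *
        (∑' l : ℤ, (if |l| ≤ 1 then (2 : ℝ≥0∞) ^ ((l : ℝ) * α) else 0)) *
        (lqNorm q₁ (fun i => (2 : ℝ≥0∞) ^ ((i : ℝ) * (s + α)) * a i) *
          lqNorm q₂ (fun j => (2 : ℝ≥0∞) ^ ((j : ℝ) * (-α)) * b j)) := by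
  set x : ℤ → ℝ≥0∞ := fun i => (2 : ℝ≥0∞) ^ ((i : ℝ) * (s + α)) * a i with hx
  set y : ℤ → ℝ≥0∞ := fun j => (2 : ℝ≥0∞) ^ ((j : ℝ) * (-α)) * b j with hy
  set u : ℤ → ℝ≥0∞ := fun m => if -3 ≤ m then (2 : ℝ≥0∞) ^ (-(m : ℝ) * s) else 0 with hu
  set v : ℤ → ℝ≥0∞ := fun l => if |l| ≤ 1 then (2 : ℝ≥0∞) ^ ((l : ℝ) * α) else 0 with hv
  have hterm : ∀ k m l : ℤ, (2 : ℝ≥0∞) ^ ((k : ℝ) * s) *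
      (if |m + k - (l + (m + k))| ≤ 1 ∧ k ≤ m + k + 3 then a (m + k) * b (l + (m + k)) else 0)
      = u m * v l * (x (k + m) * y (k + (m + l))) := by
    intro k m l
    have e : m + k - (l + (m + k)) = -l := by ring
    simp only [e, abs_neg, hu, hv]
    by_cases hl : |l| ≤ 1
    · by_cases hm : -3 ≤ m
      · rw [if_pos ⟨hl, by omega⟩, if_pos hl, if_pos hm, hx, hy]
        have hexp : (2 : ℝ≥0∞) ^ ((k : ℝ) * s) = 2 ^ (-(m : ℝ) * s) * 2 ^ ((l : ℝ) * α) *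
            (2 ^ (((k + m : ℤ) : ℝ) * (s + α)) * 2 ^ (((k + (m + l) : ℤ) : ℝ) * (-α))) := by
          simp only [← ENNReal.rpow_add _ _ (two_ne_zero' ℝ≥0∞) ENNReal.ofNat_ne_top]
          congr 1
          push_cast
          ring
        rw [hexp, show m + k = k + m by ring, show l + (k + m) = k + (m + l) by ring]
        ring
      · rw [if_neg (by omega), if_neg hm]
        simp
    · rw [if_neg fun h => hl h.1, if_neg hl]
      simp
  calc lqNorm q (fun k => (2 : ℝ≥0∞) ^ ((k : ℝ) * s) *
        ∑' ij : ℤ × ℤ, if |ij.1 - ij.2| ≤ 1 ∧ k ≤ ij.1 + 3 then a ij.1 * b ij.2 else 0)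
      ≤ lqNorm q (fun k => ∑' ml : ℤ × ℤ,
          u ml.1 * v ml.2 * (x (k + ml.1) * y (k + (ml.1 + ml.2)))) := by
        refine lqNorm_mono fun k => le_of_eq ?_
        rw [ENNReal.tsum_prod' (f := fun ij : ℤ × ℤ =>
            if |ij.1 - ij.2| ≤ 1 ∧ k ≤ ij.1 + 3 then a ij.1 * b ij.2 else 0),
          ENNReal.tsum_prod' (f := fun ml : ℤ × ℤ =>
            u ml.1 * v ml.2 * (x (k + ml.1) * y (k + (ml.1 + ml.2)))),
          ← (Equiv.addRight k).tsum_eq, ← ENNReal.tsum_mul_left]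
        refine tsum_congr fun m => ?_
        rw [← (Equiv.addRight (m + k)).tsum_eq, ← ENNReal.tsum_mul_left]
        exact tsum_congr fun l => hterm k m l
    _ ≤ ∑' ml : ℤ × ℤ, lqNorm q (fun k =>
          u ml.1 * v ml.2 * (x (k + ml.1) * y (k + (ml.1 + ml.2)))) := lqNorm_tsum_le hq _
    _ ≤ ∑' ml : ℤ × ℤ, u ml.1 * v ml.2 * (lqNorm q₁ x * lqNorm q₂ y) := by
        refine ENNReal.tsum_le_tsum fun ml => ?_
        rw [lqNorm_const_mul hq, ← lqNorm_comp_equiv q₁ x (Equiv.addRight ml.1),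
          ← lqNorm_comp_equiv q₂ y (Equiv.addRight (ml.1 + ml.2))]
        gcongr
        exact lqNorm_mul_le hq hq₁ hq₂ hq12 _ _
    _ = (∑' m, u m) * (∑' l, v l) * (lqNorm q₁ x * lqNorm q₂ y) := by
        rw [ENNReal.tsum_mul_right, ENNReal.tsum_prod' (f := fun ml : ℤ × ℤ => u ml.1 * v ml.2)]
        simp_rw [ENNReal.tsum_mul_left, ENNReal.tsum_mul_right]

/-- **Remainder estimate for Bony's decomposition**: the series
`R(f₁,f₂) = Σ_{i,j∈ℤ, |i-j|≤1} (Δ_i f₁)(Δ_j f₂)` converges in the space of tempered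
distributions (pointwise, and when paired against any Schwartz test function), and
`‖R(f₁,f₂)‖_{Ḃ^s_{p,q}} ≤ C ‖f₁‖_{Ḃ^{s+α}_{p₁,q₁}} ‖f₂‖_{Ḃ^{-α}_{p₂,q₂}}`, with a
constant `C` depending only on `n`, `χ`, `s`, `α` and the indices. -/
theorem paraproduct_remainder_estimate
    (n : ℕ) (hn : 1 ≤ n) (χ : EuclideanSpace ℝ (Fin n) → ℝ) (hχ : IsLPCutoff χ)
    (s α : ℝ) (hs : 0 < s) (hα : 0 < α)
    (p q p₁ p₂ q₁ q₂ : ℝ≥0∞)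
    (hp : 1 ≤ p) (hq : 1 ≤ q) (hp₁ : 1 ≤ p₁) (hp₂ : 1 ≤ p₂) (hq₁ : 1 ≤ q₁) (hq₂ : 1 ≤ q₂)
    (hp12 : 1 / p = 1 / p₁ + 1 / p₂) (hq12 : 1 / q = 1 / q₁ + 1 / q₂) :
    ∃ C : ℝ≥0∞, 0 < C ∧ C < ∞ ∧
      ∀ f₁ f₂ : 𝓢(EuclideanSpace ℝ (Fin n), ℂ),
        (∀ x, Summable fun ij : ℤ × ℤ =>
          if |ij.1 - ij.2| ≤ 1 then Dproj χ ij.1 (⇑f₁) x * Dproj χ ij.2 (⇑f₂) x else 0) ∧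
        (∀ g : 𝓢(EuclideanSpace ℝ (Fin n), ℂ),
          Summable fun ij : ℤ × ℤ =>
            ∫ x, (if |ij.1 - ij.2| ≤ 1 then Dproj χ ij.1 (⇑f₁) x * Dproj χ ij.2 (⇑f₂) x else 0)
              * g x) ∧
        besovNorm χ s p q (fun x => ∑' ij : ℤ × ℤ,
            if |ij.1 - ij.2| ≤ 1 then Dproj χ ij.1 (⇑f₁) x * Dproj χ ij.2 (⇑f₂) x else 0) ≤
          C * (besovNorm χ (s + α) p₁ q₁ ⇑f₁ * besovNorm χ (-α) p₂ q₂ ⇑f₂) := by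
  set A := ∫⁻ x, ‖lpKernel χ 0 x‖ₑ
  set M := ∑' m : ℤ, (if -3 ≤ m then (2 : ℝ≥0∞) ^ (-(m : ℝ) * s) else 0)
  set L := ∑' l : ℤ, (if |l| ≤ 1 then (2 : ℝ≥0∞) ^ ((l : ℝ) * α) else 0)
  have hC : A * (M * L) ≠ ∞ := ENNReal.mul_ne_top (hχ.integrable_lpKernel 0).2.ne
    (ENNReal.mul_ne_top (tsum_two_rpow_neg_mul_ne_top hs) (tsum_two_rpow_mul_ne_top α))
  refine ⟨A * (M * L) + 1, by simp, by simpa [lt_top_iff_ne_top] using hC, fun f₁ f₂ =>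
    ⟨hχ.summable_remainderTerm f₁ f₂, hχ.summable_integral_remainderTerm_mul f₁ f₂, ?_⟩⟩
  change besovNorm χ s p q (fun x => ∑' ij, remainderTerm χ f₁ f₂ ij x) ≤ _
  calc besovNorm χ s p q (fun x => ∑' ij, remainderTerm χ f₁ f₂ ij x)
      ≤ lqNorm q (fun k => A * ((2 : ℝ≥0∞) ^ ((k : ℝ) * s) *
          ∑' ij : ℤ × ℤ, if |ij.1 - ij.2| ≤ 1 ∧ k ≤ ij.1 + 3 then
            eLpNorm (Dproj χ ij.1 f₁) p₁ volume * eLpNorm (Dproj χ ij.2 f₂) p₂ volume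
            else 0)) := by
        refine lqNorm_mono fun k => ?_
        rw [mul_left_comm, ← ENNReal.tsum_mul_left]
        simp_rw [mul_ite, mul_zero]
        gcongr
        exact hχ.eLpNorm_Dproj_tsum_remainderTerm_le hp hp12 k f₁ f₂
    _ ≤ A * (M * L * (besovNorm χ (s + α) p₁ q₁ ⇑f₁ * besovNorm χ (-α) p₂ q₂ ⇑f₂)) := by
        rw [lqNorm_const_mul hq]
        gcongr
        exact lqNorm_tsum_near_diagonal_le hq hq₁ hq₂ hq12 s α
          (fun i => eLpNorm (Dproj χ i f₁) p₁ volume) fun j => eLpNorm (Dproj χ j f₂) p₂ volume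
    _ ≤ _ := by
        rw [← mul_assoc]
        gcongr
        exact le_self_add
end
end

section
/- Let 0 < α < 1. There exists a constant C > 0 such that for every Schwartz vector field u : ℝ³ → ℝ³ with div u = 0 and vorticity ω = curl u, the tensor product ω ⊗ u (the 3×3 matrix with entries ω^i u^j) satisfies ‖ω ⊗ u‖_{Ḃ^{1−α}_{2,2}} ≤ C (‖∇ω‖_{L²} ‖ω‖_{Ḃ^{−1−α}_{∞,∞}} + ‖ω‖_{Ḃ^{−α}_{∞,∞}} ‖ω‖_{L²}), the inequality holding in [0,∞]. -/
open MeasureTheory Real Complex Filter Function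
open scoped ENNReal FourierTransform SchwartzMap

noncomputable section

noncomputable section

/-- Abbreviation for the Euclidean space `ℝ³`. -/
abbrev E3 := EuclideanSpace ℝ (Fin 3)

/-- The partial derivative `∂ᵢ f` in the `i`-th coordinate direction. -/
def pd (i : Fin 3) (f : E3 → ℝ) : E3 → ℝ :=
  fun x => fderiv ℝ f x (EuclideanSpace.single i 1)

/-- The curl `∇ × u = (∂₂u³ - ∂₃u², ∂₃u¹ - ∂₁u³, ∂₁u² - ∂₂u¹)` of a vector field on `ℝ³`. -/
def curl3 (u : Fin 3 → E3 → ℝ) : Fin 3 → E3 → ℝ :=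
  ![fun x => pd 1 (u 2) x - pd 2 (u 1) x,
    fun x => pd 2 (u 0) x - pd 0 (u 2) x,
    fun x => pd 0 (u 1) x - pd 1 (u 0) x]

/-- The curl of a Schwartz vector field on `ℝ³`. -/
def curlS (u : Fin 3 → 𝓢(E3, ℝ)) : Fin 3 → E3 → ℝ :=
  curl3 fun i => ⇑(u i)

/-- The `L²` norm of a vector field (the `ℓ²` combination of the componentwise norms),
valued in `[0,∞]`. -/
def vecL2 (v : Fin 3 → E3 → ℝ) : ℝ≥0∞ :=
  (∑ i : Fin 3, eLpNorm (v i) 2 volume ^ (2 : ℝ)) ^ (1 / 2 : ℝ)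

/-- The `L²` norm `‖∇v‖_{L²}` of the gradient of a vector field,
`‖∇v‖_{L²}² = Σ_{i,j} ‖∂ᵢ vʲ‖_{L²}²`, valued in `[0,∞]`. -/
def gradL2 (v : Fin 3 → E3 → ℝ) : ℝ≥0∞ :=
  (∑ i : Fin 3, ∑ j : Fin 3, eLpNorm (pd i (v j)) 2 volume ^ (2 : ℝ)) ^ (1 / 2 : ℝ)

/-- The homogeneous Besov norm `‖v‖_{Ḃ^s_{∞,∞}} = sup_j 2^{js} ‖Δ_j v‖_{L^∞}` of a real
vector field on `ℝ³`, taken as the maximum (supremum) over the components. -/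
def vecBesovInf (χ : E3 → ℝ) (s : ℝ) (v : Fin 3 → E3 → ℝ) : ℝ≥0∞ :=
  ⨆ i : Fin 3, ⨆ j : ℤ,
    (2 : ℝ≥0∞) ^ ((j : ℝ) * s) * eLpNorm (Dproj χ j fun x => ((v i x : ℝ) : ℂ)) ⊤ volume

/-- The homogeneous Besov norm `Ḃ^s_{2,2}` of a 3×3-matrix field, as the `ℓ²`
combination of the componentwise Besov norms. -/
def matBesov22 (χ : E3 → ℝ) (s : ℝ) (m : Fin 3 → Fin 3 → E3 → ℝ) : ℝ≥0∞ :=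
  (∑ i : Fin 3, ∑ j : Fin 3,
      besovNorm χ s 2 2 (fun x => ((m i j x : ℝ) : ℂ)) ^ (2 : ℝ)) ^ (1 / 2 : ℝ)

/-- The `L²` norm of `Λ^α v`, where `Λ^α f = 𝓕⁻¹(|ξ|^α 𝓕 f)` acts componentwise on the
real vector field `v`, taken as the `ℓ²` combination of the componentwise norms. -/
def vecFracLapL2 (α : ℝ) (v : Fin 3 → E3 → ℝ) : ℝ≥0∞ :=
  (∑ i : Fin 3,
      eLpNorm (𝓕⁻ fun ξ => ((‖ξ‖ ^ α : ℝ) : ℂ) * 𝓕 (fun x => ((v i x : ℝ) : ℂ)) ξ) 2 volume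
        ^ (2 : ℝ)) ^ (1 / 2 : ℝ)

/-- The vortex-stretching integral `∫ ((ω·∇)u)·ω dx` of a Schwartz vector field `u`
with vorticity `ω = curl u`. -/
def vortexStretch (u : Fin 3 → 𝓢(E3, ℝ)) : ℝ :=
  ∫ x, ∑ j : Fin 3, (∑ i : Fin 3, curlS u i x * pd i (⇑(u j)) x) * curlS u j x


namespace SchwartzMap

variable {V : Type*} [NormedAddCommGroup V] [InnerProductSpace ℝ V]

/-- The pointwise product of two complex-valued Schwartz functions. -/
def pmul (f g : 𝓢(V, ℂ)) : 𝓢(V, ℂ) :=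
  pairing (ContinuousLinearMap.mul ℂ ℂ) f g

@[simp]
lemma pmul_apply (f g : 𝓢(V, ℂ)) (x : V) : pmul f g x = f x * g x := rfl

variable [FiniteDimensional ℝ V] [MeasurableSpace V] [BorelSpace V]

/-- The Fourier multiplier with a Schwartz symbol `m`. -/
def mult (m f : 𝓢(V, ℂ)) : 𝓢(V, ℂ) := 𝓕⁻ (pmul m (𝓕 f))

@[simp]
lemma fourier_mult (m f : 𝓢(V, ℂ)) : 𝓕 (mult m f) = pmul m (𝓕 f) := by
  simp [mult]

lemma fourier_sub (f g : 𝓢(V, ℂ)) : 𝓕 (f - g) = 𝓕 f - 𝓕 g :=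
  map_sub (FourierTransform.fourierCLM ℂ 𝓢(V, ℂ)) f g

lemma fourier_injective : Function.Injective (𝓕 : 𝓢(V, ℂ) → 𝓢(V, ℂ)) :=
  fun f g h => by
    have := congrArg (𝓕⁻ : 𝓢(V, ℂ) → 𝓢(V, ℂ)) h
    simpa using this

lemma mult_eq_convolution (m f : 𝓢(V, ℂ)) :
    mult m f = convolution (ContinuousLinearMap.mul ℂ ℂ) (𝓕⁻ m) f := by
  apply fourier_injective
  rw [fourier_mult, fourier_convolution]
  simp [pmul]

lemma mult_apply (m f : 𝓢(V, ℂ)) (x : V) :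
    mult m f x = ∫ t, 𝓕⁻ m t * f (x - t) := by
  rw [mult_eq_convolution, convolution_apply]
  rfl

lemma eLpNorm_top_mult_le (m f : 𝓢(V, ℂ)) :
    eLpNorm (mult m f) ⊤ volume ≤ eLpNorm (𝓕⁻ m : 𝓢(V, ℂ)) 1 volume * eLpNorm f ⊤ volume := by
  rw [eLpNorm_exponent_top (f := mult m f)]
  refine eLpNormEssSup_le_of_ae_enorm_bound (Eventually.of_forall fun x => ?_)
  rw [mult_apply]
  refine (enorm_integral_le_lintegral_enorm _).trans ?_
  have h : ∀ᵐ t : V, ‖f (x - t)‖ₑ ≤ eLpNorm f ⊤ volume := by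
    have := enorm_ae_le_eLpNormEssSup f (volume : Measure V)
    exact (Measure.measurePreserving_sub_left volume x).quasiMeasurePreserving.ae this
  calc ∫⁻ t, ‖𝓕⁻ m t * f (x - t)‖ₑ
      ≤ ∫⁻ t, ‖𝓕⁻ m t‖ₑ * eLpNorm f ⊤ volume := by
        refine lintegral_mono_ae (h.mono fun t ht => ?_)
        rw [enorm_mul]
        gcongr
    _ = _ := by
        rw [lintegral_mul_const _ (by fun_prop), eLpNorm_one_eq_lintegral_enorm]

lemma eLpNorm_two_fourier (f : 𝓢(V, ℂ)) : eLpNorm (𝓕 f : 𝓢(V, ℂ)) 2 volume = eLpNorm f 2 volume := by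
  have h := norm_fourier_toL2_eq f
  rw [norm_toLp, norm_toLp] at h
  have h₁ : eLpNorm (𝓕 f : 𝓢(V, ℂ)) 2 volume ≠ ∞ := (eLpNorm_lt_top _ 2 volume).ne
  have h₂ : eLpNorm f 2 volume ≠ ∞ := (eLpNorm_lt_top _ 2 volume).ne
  exact (ENNReal.toReal_eq_toReal_iff' h₁ h₂).mp h

lemma eLpNorm_two_sq (f : V → ℂ) : eLpNorm f 2 volume ^ 2 = ∫⁻ x, ‖f x‖ₑ ^ 2 := by
  rw [eLpNorm_eq_lintegral_rpow_enorm_toReal (by norm_num) (by norm_num), ← ENNReal.rpow_two,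
    ← ENNReal.rpow_mul]
  simp

lemma eLpNorm_two_mult_sq (m f : 𝓢(V, ℂ)) :
    eLpNorm (mult m f) 2 volume ^ 2 = ∫⁻ ξ, (‖m ξ‖ₑ * ‖𝓕 f ξ‖ₑ) ^ 2 := by
  rw [← eLpNorm_two_fourier, eLpNorm_two_sq]
  simp [enorm_mul]

lemma eLpNorm_two_mult_le {m : 𝓢(V, ℂ)} (hm : ∀ ξ, ‖m ξ‖ ≤ 1) (f : 𝓢(V, ℂ)) :
    eLpNorm (mult m f) 2 volume ≤ eLpNorm f 2 volume := by
  rw [← eLpNorm_two_fourier, ← eLpNorm_two_fourier f, fourier_mult]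
  refine eLpNorm_mono fun ξ => ?_
  rw [pmul_apply, norm_mul]
  exact mul_le_of_le_one_left (norm_nonneg _) (hm ξ)

lemma fourier_pmul_eq_zero {f g : 𝓢(V, ℂ)} {r s : ℝ} (hf : ∀ ξ, r < ‖ξ‖ → 𝓕 f ξ = 0)
    (hg : ∀ ξ, s < ‖ξ‖ → 𝓕 g ξ = 0) {ξ : V} (hξ : r + s < ‖ξ‖) : 𝓕 (pmul f g) ξ = 0 := by
  have hkey : 𝓕 (pmul f g) = convolution (ContinuousLinearMap.mul ℂ ℂ) (𝓕 f) (𝓕 g) := by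
    have h1 : ∀ (h : 𝓢(V, ℂ)) (x : V), 𝓕 (𝓕 h) x = h (-x) := fun h x => by
      have : 𝓕⁻ (𝓕 h) (-x) = h (-x) := by simp
      rw [← this, fourierInv_apply_eq]
      simp
    apply fourier_injective
    ext x
    rw [fourier_convolution, h1]
    simp [h1]
  rw [hkey, convolution_apply]
  refine integral_eq_zero_of_ae (Eventually.of_forall fun t => ?_)
  by_cases ht : r < ‖t‖
  · simp [hf t ht]
  · have : s < ‖ξ - t‖ := by
      have := norm_sub_norm_le ξ t
      linarith
    simp [hg _ this]

lemma eLpNorm_one_fourierInv_comp_smul {m m' : 𝓢(V, ℂ)} {c : ℝ} (hc : c ≠ 0)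
    (h : ∀ ξ, m' ξ = m (c • ξ)) :
    eLpNorm (𝓕⁻ m' : 𝓢(V, ℂ)) 1 volume = eLpNorm (𝓕⁻ m : 𝓢(V, ℂ)) 1 volume := by
  have hpt : ∀ x, 𝓕⁻ m' x = |(c ^ Module.finrank ℝ V)⁻¹| • 𝓕⁻ m (c⁻¹ • x) := fun x => by
    rw [fourierInv_coe, fourierInv_coe, Real.fourierInv_eq, Real.fourierInv_eq,
      ← Measure.integral_comp_smul]
    refine integral_congr_ae (Eventually.of_forall fun ξ => ?_)
    simp [h, inner_smul_left, inner_smul_right, hc]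
  have hint : ∫ x, ‖𝓕⁻ m' x‖ = ∫ x, ‖𝓕⁻ m x‖ := by
    simp_rw [hpt, norm_smul, integral_const_mul]
    rw [Measure.integral_comp_smul volume (fun x => ‖𝓕⁻ m x‖)]
    simp only [norm_eq_abs, abs_abs, smul_eq_mul, ← mul_assoc, ← abs_mul]
    simp [hc]
  rw [eLpNorm_one_eq_lintegral_enorm, eLpNorm_one_eq_lintegral_enorm,
    ← ofReal_integral_norm_eq_lintegral_enorm (𝓕⁻ m').integrable,
    ← ofReal_integral_norm_eq_lintegral_enorm (𝓕⁻ m).integrable, hint]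

end SchwartzMap

section LittlewoodPaley

open SchwartzMap

lemma eLpNorm_top_le_lintegral_fourier (f : 𝓢(E3, ℂ)) :
    eLpNorm f ⊤ volume ≤ ∫⁻ ξ, ‖𝓕 f ξ‖ₑ := by
  rw [eLpNorm_exponent_top]
  refine eLpNormEssSup_le_of_ae_enorm_bound (Eventually.of_forall fun x => ?_)
  have h : f x = 𝓕⁻ (𝓕 f) x := by simp
  rw [h, fourierInv_coe, Real.fourierInv_eq]
  refine (enorm_integral_le_lintegral_enorm _).trans (lintegral_mono fun ξ => ?_)
  simp [enorm_eq_nnnorm, ← NNReal.coe_le_coe]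

variable {χ : E3 → ℝ}

/-- The symbol `χ(2⁻ᵏ ξ)` of the low-frequency projection, as a Schwartz function. -/
def lowSymbol (hχ : IsLPCutoff χ) (k : ℤ) : 𝓢(E3, ℂ) :=
  HasCompactSupport.toSchwartzMap (f := fun ξ => ((χ ((2 : ℝ) ^ (-k) • ξ) : ℝ) : ℂ))
    ((hχ.2.1.comp_smul (by positivity)).comp_left (g := fun r : ℝ => (r : ℂ)) rfl)
    (Complex.ofRealCLM.contDiff.comp (hχ.1.comp (contDiff_const_smul _)))

lemma lowSymbol_apply (hχ : IsLPCutoff χ) (k : ℤ) (ξ : E3) :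
    lowSymbol hχ k ξ = ((χ ((2 : ℝ) ^ (-k) • ξ) : ℝ) : ℂ) := rfl

/-- The symbol `χ(2⁻ᵏ⁻¹ ξ) - χ(2⁻ᵏ ξ)` of a Littlewood–Paley block. -/
def blockSymbol (hχ : IsLPCutoff χ) (k : ℤ) : 𝓢(E3, ℂ) :=
  lowSymbol hχ (k + 1) - lowSymbol hχ k

lemma norm_zpow_smul (k : ℤ) (ξ : E3) : ‖(2 : ℝ) ^ (-k) • ξ‖ = ‖ξ‖ / 2 ^ k := by
  rw [norm_smul, norm_of_nonneg (by positivity), zpow_neg]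
  field_simp

lemma norm_lowSymbol_le (hχ : IsLPCutoff χ) (k : ℤ) (ξ : E3) : ‖lowSymbol hχ k ξ‖ ≤ 1 := by
  rw [lowSymbol_apply, Complex.norm_real, norm_of_nonneg (hχ.2.2.2.1 _)]
  exact hχ.2.2.2.2.1 _

lemma lowSymbol_eq_one (hχ : IsLPCutoff χ) {k : ℤ} {ξ : E3} (h : ‖ξ‖ ≤ 3 / 4 * 2 ^ k) :
    lowSymbol hχ k ξ = 1 := by
  rw [lowSymbol_apply, hχ.2.2.2.2.2.1, Complex.ofReal_one]
  rw [norm_zpow_smul, div_le_iff₀ (by positivity)]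
  exact h

lemma lowSymbol_eq_zero (hχ : IsLPCutoff χ) {k : ℤ} {ξ : E3} (h : 4 / 3 * 2 ^ k < ‖ξ‖) :
    lowSymbol hχ k ξ = 0 := by
  rw [lowSymbol_apply, hχ.2.2.2.2.2.2, Complex.ofReal_zero]
  rw [norm_zpow_smul, lt_div_iff₀ (by positivity)]
  exact h

lemma norm_blockSymbol_le (hχ : IsLPCutoff χ) (k : ℤ) (ξ : E3) : ‖blockSymbol hχ k ξ‖ ≤ 1 := by
  rw [blockSymbol, sub_apply, lowSymbol_apply, lowSymbol_apply, ← Complex.ofReal_sub,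
    Complex.norm_real, norm_eq_abs, abs_le]
  have h₁ := hχ.2.2.2.1
  have h₂ := hχ.2.2.2.2.1
  constructor <;>
    linarith [h₁ ((2 : ℝ) ^ (-(k + 1)) • ξ), h₁ ((2 : ℝ) ^ (-k) • ξ),
      h₂ ((2 : ℝ) ^ (-(k + 1)) • ξ), h₂ ((2 : ℝ) ^ (-k) • ξ)]

lemma blockSymbol_eq_zero_of_le (hχ : IsLPCutoff χ) {k : ℤ} {ξ : E3}
    (h : ‖ξ‖ ≤ 3 / 4 * 2 ^ k) : blockSymbol hχ k ξ = 0 := by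
  have h' : ‖ξ‖ ≤ 3 / 4 * 2 ^ (k + 1) := by
    rw [zpow_add_one₀ two_ne_zero]
    have : (0 : ℝ) < 2 ^ k := by positivity
    linarith
  rw [blockSymbol, sub_apply, lowSymbol_eq_one hχ h, lowSymbol_eq_one hχ h', sub_self]

lemma blockSymbol_eq_zero_of_lt (hχ : IsLPCutoff χ) {k : ℤ} {ξ : E3}
    (h : 4 / 3 * 2 ^ (k + 1) < ‖ξ‖) : blockSymbol hχ k ξ = 0 := by
  have h' : 4 / 3 * 2 ^ k < ‖ξ‖ := by
    rw [zpow_add_one₀ two_ne_zero] at h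
    have : (0 : ℝ) < 2 ^ k := by positivity
    linarith
  rw [blockSymbol, sub_apply, lowSymbol_eq_zero hχ h, lowSymbol_eq_zero hχ h', sub_self]

/-- The low-frequency projection on Schwartz functions. -/
def low (hχ : IsLPCutoff χ) (k : ℤ) (f : 𝓢(E3, ℂ)) : 𝓢(E3, ℂ) := mult (lowSymbol hχ k) f

/-- The Littlewood–Paley block on Schwartz functions. -/
def block (hχ : IsLPCutoff χ) (k : ℤ) (f : 𝓢(E3, ℂ)) : 𝓢(E3, ℂ) := mult (blockSymbol hχ k) f

lemma coe_block (hχ : IsLPCutoff χ) (k : ℤ) (f : 𝓢(E3, ℂ)) : ⇑(block hχ k f) = Dproj χ k f := by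
  rw [block, mult, fourierInv_coe, Dproj]
  congr 1
  ext ξ
  simp [blockSymbol, lowSymbol_apply, fourier_coe]

lemma block_eq (hχ : IsLPCutoff χ) (k : ℤ) (f : 𝓢(E3, ℂ)) :
    block hχ k f = low hχ (k + 1) f - low hχ k f := by
  apply fourier_injective
  rw [SchwartzMap.fourier_sub]
  ext ξ
  simp [block, low, blockSymbol, sub_mul]

lemma fourier_low_eq_zero (hχ : IsLPCutoff χ) (k : ℤ) (f : 𝓢(E3, ℂ)) (ξ : E3)
    (h : 4 / 3 * 2 ^ k < ‖ξ‖) : 𝓕 (low hχ k f) ξ = 0 := by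
  simp [low, lowSymbol_eq_zero hχ h]

lemma fourier_block_eq_zero (hχ : IsLPCutoff χ) (k : ℤ) (f : 𝓢(E3, ℂ)) (ξ : E3)
    (h : 4 / 3 * 2 ^ (k + 1) < ‖ξ‖) : 𝓕 (block hχ k f) ξ = 0 := by
  simp [block, blockSymbol_eq_zero_of_lt hχ h]

lemma block_eq_zero_of_fourier (hχ : IsLPCutoff χ) {j : ℤ} {f : 𝓢(E3, ℂ)} {r : ℝ}
    (hr : r ≤ 3 / 4 * 2 ^ j) (hf : ∀ ξ, r < ‖ξ‖ → 𝓕 f ξ = 0) : block hχ j f = 0 := by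
  apply fourier_injective
  ext ξ
  rw [FourierTransform.fourier_zero]
  by_cases h : r < ‖ξ‖
  · simp [block, hf ξ h]
  · simp [block, blockSymbol_eq_zero_of_le hχ ((not_lt.mp h).trans hr)]

lemma eLpNorm_two_low_le (hχ : IsLPCutoff χ) (k : ℤ) (f : 𝓢(E3, ℂ)) :
    eLpNorm (low hχ k f) 2 volume ≤ eLpNorm f 2 volume :=
  eLpNorm_two_mult_le (norm_lowSymbol_le hχ k) f

lemma eLpNorm_two_block_le (hχ : IsLPCutoff χ) (k : ℤ) (f : 𝓢(E3, ℂ)) :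
    eLpNorm (block hχ k f) 2 volume ≤ eLpNorm f 2 volume :=
  eLpNorm_two_mult_le (norm_blockSymbol_le hχ k) f

lemma tendsto_eLpNorm_top_low (hχ : IsLPCutoff χ) (k : ℤ) (f : 𝓢(E3, ℂ)) :
    Tendsto (fun N : ℕ => eLpNorm (low hχ (k - N) f) ⊤ volume) atTop (nhds 0) := by
  have h : Tendsto (fun N : ℕ => ∫⁻ ξ, ‖𝓕 (low hχ (k - N) f) ξ‖ₑ) atTop
      (nhds (∫⁻ _ : E3, 0)) := by
    refine tendsto_lintegral_of_dominated_convergence (fun ξ => ‖𝓕 f ξ‖ₑ)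
      (fun N => by fun_prop) (fun N => Eventually.of_forall fun ξ => ?_)
      ((𝓕 f).integrable (μ := volume)).2.ne ?_
    · simp only [low, fourier_mult, pmul_apply, enorm_mul]
      refine mul_le_of_le_one_left zero_le ?_
      rw [← ofReal_norm]
      exact ENNReal.ofReal_le_one.mpr (norm_lowSymbol_le _ _ _)
    · filter_upwards [compl_mem_ae_iff.mpr (measure_singleton (0 : E3))] with ξ hξ
      have hpos : 0 < ‖ξ‖ := norm_pos_iff.mpr hξ
      refine tendsto_const_nhds.congr' ?_
      have := (tendsto_pow_atTop_nhds_zero_of_lt_one (r := (1 / 2 : ℝ)) (by norm_num)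
        (by norm_num)).const_mul (4 / 3 * 2 ^ k)
      rw [mul_zero] at this
      filter_upwards [this.eventually_lt_const hpos] with N hN
      rw [fourier_low_eq_zero, enorm_zero]
      rw [zpow_sub₀ two_ne_zero, zpow_natCast]
      have h2 : (4 / 3 * (2 ^ k / 2 ^ N) : ℝ) = 4 / 3 * 2 ^ k * (1 / 2) ^ N := by
        rw [one_div, inv_pow, mul_assoc, div_eq_mul_inv (2 ^ k : ℝ)]
      exact h2 ▸ hN
  simp only [lintegral_zero] at h
  exact tendsto_of_tendsto_of_tendsto_of_le_of_le tendsto_const_nhds h (fun _ => zero_le)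
    (fun N => eLpNorm_top_le_lintegral_fourier _)

lemma tendsto_eLpNorm_top_sub_low (hχ : IsLPCutoff χ) (f : 𝓢(E3, ℂ)) :
    Tendsto (fun N : ℕ => eLpNorm (f - low hχ N f : 𝓢(E3, ℂ)) ⊤ volume) atTop (nhds 0) := by
  have hF : ∀ (N : ℕ) ξ, 𝓕 (f - low hχ N f) ξ = (1 - lowSymbol hχ N ξ) * 𝓕 f ξ := fun N ξ => by
    rw [SchwartzMap.fourier_sub]
    simp [low, sub_mul]
  have h : Tendsto (fun N : ℕ => ∫⁻ ξ, ‖𝓕 (f - low hχ N f) ξ‖ₑ) atTop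
      (nhds (∫⁻ _ : E3, 0)) := by
    refine tendsto_lintegral_of_dominated_convergence (fun ξ => ‖𝓕 f ξ‖ₑ)
      (fun N => by fun_prop) (fun N => Eventually.of_forall fun ξ => ?_)
      ((𝓕 f).integrable (μ := volume)).2.ne ?_
    · simp only [hF, enorm_mul]
      refine mul_le_of_le_one_left zero_le ?_
      rw [← ofReal_norm, lowSymbol_apply, ← Complex.ofReal_one, ← Complex.ofReal_sub,
        Complex.norm_real, norm_of_nonneg (sub_nonneg.mpr (hχ.2.2.2.2.1 _))]
      exact ENNReal.ofReal_le_one.mpr (by linarith [hχ.2.2.2.1 ((2 : ℝ) ^ (-(N : ℤ)) • ξ)])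
    · refine Eventually.of_forall fun ξ => tendsto_const_nhds.congr' ?_
      have := (tendsto_pow_atTop_atTop_of_one_lt (one_lt_two (α := ℝ))).const_mul_atTop
        (show (0 : ℝ) < 3 / 4 by norm_num)
      filter_upwards [this.eventually_ge_atTop ‖ξ‖] with N hN
      rw [hF, lowSymbol_eq_one hχ (by simpa using hN)]
      simp
  simp only [lintegral_zero] at h
  exact tendsto_of_tendsto_of_tendsto_of_le_of_le tendsto_const_nhds h (fun _ => zero_le)
    (fun N => eLpNorm_top_le_lintegral_fourier _)

end LittlewoodPaley

section Sequences

/-- The sum of the geometric series with ratio `2⁻ˢ`. -/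
def geomConst (s : ℝ) : ℝ≥0∞ := (1 - 2 ^ (-s))⁻¹

lemma geomConst_lt_top {s : ℝ} (hs : 0 < s) : geomConst s < ∞ := by
  rw [geomConst, ENNReal.inv_lt_top, tsub_pos_iff_lt]
  exact ENNReal.rpow_lt_one_of_one_lt_of_neg ENNReal.one_lt_two (by linarith)

lemma two_rpow_add (x y : ℝ) : (2 : ℝ≥0∞) ^ (x + y) = 2 ^ x * 2 ^ y :=
  ENNReal.rpow_add x y two_ne_zero ENNReal.ofNat_ne_top

lemma tsum_two_rpow_sub (s : ℝ) (a : ℤ) :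
    ∑' i : ℕ, (2 : ℝ≥0∞) ^ (((a - i : ℤ) : ℝ) * s) = geomConst s * 2 ^ (a * s) := by
  rw [geomConst, ← ENNReal.tsum_geometric, mul_comm, ← ENNReal.tsum_mul_left]
  congr 1
  ext i
  rw [← ENNReal.rpow_natCast, ← ENNReal.rpow_mul, ← two_rpow_add]
  push_cast
  ring_nf

lemma tsum_two_rpow_Iic (s : ℝ) (a : ℤ) :
    ∑' k : ℤ, (if k ≤ a then (2 : ℝ≥0∞) ^ (k * s) else 0) = geomConst s * 2 ^ (a * s) := by
  have hinj : Function.Injective fun i : ℕ => a - (i : ℤ) := fun i j h => by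
    simpa using h
  rw [← tsum_two_rpow_sub, ← hinj.tsum_eq]
  · simp
  · intro k hk
    have : k ≤ a := by
      by_contra h
      simp [h] at hk
    exact ⟨(a - k).toNat, by simp; omega⟩

lemma mul_le_sq_add_sq (a b : ℝ≥0∞) : a * b ≤ a ^ 2 + b ^ 2 := by
  rcases le_total a b with h | h
  · calc a * b ≤ b * b := by gcongr
      _ ≤ _ := by rw [← sq]; exact le_add_self
  · calc a * b ≤ a * a := by gcongr
      _ ≤ _ := by rw [← sq]; exact le_self_add

lemma ennreal_add_sq_le (a b : ℝ≥0∞) : (a + b) ^ 2 ≤ 3 * (a ^ 2 + b ^ 2) := by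
  calc (a + b) ^ 2 = (a ^ 2 + b ^ 2) + 2 * (a * b) := by ring
    _ ≤ (a ^ 2 + b ^ 2) + 2 * (a ^ 2 + b ^ 2) := by gcongr; exact mul_le_sq_add_sq a b
    _ = _ := by ring

lemma tsum_mul_sq_le {ι : Type*} (w c : ι → ℝ≥0∞) :
    (∑' k, w k * c k) ^ 2 ≤ 2 * ((∑' k, w k) * ∑' k, w k * c k ^ 2) := by
  have h₁ : (∑' k, w k * c k) ^ 2 = ∑' k, ∑' l, (w k * w l) * (c k * c l) := by
    rw [sq, ← ENNReal.tsum_mul_right]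
    congr 1
    ext k
    rw [← ENNReal.tsum_mul_left]
    congr 1
    ext l
    ring
  have h₂ : ∑' k, ∑' l, (w k * w l) * c l ^ 2 = (∑' k, w k) * ∑' k, w k * c k ^ 2 := by
    simp_rw [mul_assoc, ENNReal.tsum_mul_left, ENNReal.tsum_mul_right]
  have h₃ : ∑' k, ∑' l, (w k * w l) * c k ^ 2 = (∑' k, w k) * ∑' k, w k * c k ^ 2 := by
    rw [ENNReal.tsum_comm, ← h₂]
    simp_rw [mul_comm (w _) (w _)]
  calc (∑' k, w k * c k) ^ 2
      ≤ ∑' k, ∑' l, ((w k * w l) * c k ^ 2 + (w k * w l) * c l ^ 2) := by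
        rw [h₁]
        refine ENNReal.tsum_le_tsum fun k => ENNReal.tsum_le_tsum fun l => ?_
        rw [← mul_add]
        gcongr
        exact mul_le_sq_add_sq _ _
    _ = _ := by
        simp_rw [ENNReal.tsum_add]
        rw [h₂, h₃, two_mul]

/-- The Young inequality `ℓ¹ * ℓ² ⊆ ℓ²` on `ℤ`. -/
lemma tsum_conv_sq_le (w c : ℤ → ℝ≥0∞) :
    ∑' j, (∑' k, w (j - k) * c k) ^ 2 ≤ 2 * (∑' n, w n) ^ 2 * ∑' k, c k ^ 2 := by
  have hl : ∀ j, ∑' k, w (j - k) = ∑' n, w n := fun j => (Equiv.subLeft j).tsum_eq w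
  have hr : ∀ k, ∑' j, w (j - k) = ∑' n, w n := fun k => (Equiv.subRight k).tsum_eq w
  calc ∑' j, (∑' k, w (j - k) * c k) ^ 2
      ≤ ∑' j, 2 * ((∑' k, w (j - k)) * ∑' k, w (j - k) * c k ^ 2) :=
        ENNReal.tsum_le_tsum fun j => tsum_mul_sq_le _ _
    _ = _ := by
        simp_rw [hl, ENNReal.tsum_mul_left]
        rw [ENNReal.tsum_comm]
        simp_rw [ENNReal.tsum_mul_right, hr, ENNReal.tsum_mul_left]
        ring

end Sequences

section Product

open SchwartzMap

variable {χ : E3 → ℝ}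

lemma low_sub (hχ : IsLPCutoff χ) (k : ℤ) (f g : 𝓢(E3, ℂ)) :
    low hχ k (f - g) = low hχ k f - low hχ k g := by
  apply fourier_injective
  rw [SchwartzMap.fourier_sub]
  ext ξ
  simp [low, SchwartzMap.fourier_sub, mul_sub]

lemma block_sub (hχ : IsLPCutoff χ) (k : ℤ) (f g : 𝓢(E3, ℂ)) :
    block hχ k (f - g) = block hχ k f - block hχ k g := by
  rw [block_eq, block_eq, block_eq, low_sub, low_sub]
  abel

lemma block_add (hχ : IsLPCutoff χ) (k : ℤ) (f g : 𝓢(E3, ℂ)) :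
    block hχ k (f + g) = block hχ k f + block hχ k g := by
  rw [eq_comm, ← eq_sub_iff_add_eq, ← block_sub, add_sub_cancel_right]

lemma eLpNorm_coe_add_le (f g : 𝓢(E3, ℂ)) {p : ℝ≥0∞} (hp : 1 ≤ p) :
    eLpNorm (f + g : 𝓢(E3, ℂ)) p volume ≤ eLpNorm f p volume + eLpNorm g p volume :=
  eLpNorm_add_le f.continuous.aestronglyMeasurable g.continuous.aestronglyMeasurable hp

lemma eLpNorm_two_pmul_le_left (f g : 𝓢(E3, ℂ)) :
    eLpNorm (pmul f g) 2 volume ≤ eLpNorm f ⊤ volume * eLpNorm g 2 volume :=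
  eLpNorm_smul_le_eLpNorm_top_mul_eLpNorm 2 g.continuous.aestronglyMeasurable f

lemma eLpNorm_two_pmul_le_right (f g : 𝓢(E3, ℂ)) :
    eLpNorm (pmul f g) 2 volume ≤ eLpNorm f 2 volume * eLpNorm g ⊤ volume := by
  rw [show pmul f g = pmul g f from ext fun x => mul_comm _ _, mul_comm]
  exact eLpNorm_two_pmul_le_left g f

lemma eLpNorm_top_low_le_add_sum (hχ : IsLPCutoff χ) (k : ℤ) (f : 𝓢(E3, ℂ)) (N : ℕ) :
    eLpNorm (low hχ k f) ⊤ volume ≤ eLpNorm (low hχ (k - N) f) ⊤ volume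
      + ∑ i ∈ Finset.range N, eLpNorm (block hχ (k - 1 - i) f) ⊤ volume := by
  induction N with
  | zero => simp
  | succ N ih =>
    have h : low hχ (k - N) f = low hχ (k - (N + 1 : ℕ)) f + block hχ (k - 1 - N) f := by
      rw [block_eq, show k - 1 - (N : ℤ) + 1 = k - N by ring,
        show k - ((N + 1 : ℕ) : ℤ) = k - 1 - N by push_cast; ring]
      abel
    rw [h] at ih
    rw [Finset.sum_range_succ, add_comm (Finset.sum _ _), ← add_assoc]
    refine ih.trans ?_
    gcongr
    exact eLpNorm_coe_add_le _ _ le_top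

lemma eLpNorm_top_low_le (hχ : IsLPCutoff χ) {f : 𝓢(E3, ℂ)} {α : ℝ} (hα : 0 < α) {A : ℝ≥0∞}
    (hA : ∀ k : ℤ, eLpNorm (block hχ k f) ⊤ volume ≤ 2 ^ (k * α) * A) (k : ℤ) :
    eLpNorm (low hχ k f) ⊤ volume ≤ geomConst α * 2 ^ (k * α) * A := by
  have h : ∀ N : ℕ, eLpNorm (low hχ k f) ⊤ volume ≤
      eLpNorm (low hχ (k - N) f) ⊤ volume + geomConst α * 2 ^ (k * α) * A := fun N => by
    refine (eLpNorm_top_low_le_add_sum hχ k f N).trans ?_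
    gcongr
    calc _ ≤ ∑ i ∈ Finset.range N, (2 : ℝ≥0∞) ^ (((k - i : ℤ) : ℝ) * α) * A := by
          gcongr with i
          refine (hA _).trans ?_
          gcongr
          · exact one_le_two
          · linarith
      _ ≤ ∑' i : ℕ, (2 : ℝ≥0∞) ^ (((k - i : ℤ) : ℝ) * α) * A := ENNReal.sum_le_tsum _
      _ = _ := by rw [ENNReal.tsum_mul_right, tsum_two_rpow_sub]
  refine ge_of_tendsto' (x := atTop) ?_ h
  simpa using (tendsto_eLpNorm_top_low hχ k f).add_const (geomConst α * 2 ^ (k * α) * A)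

/-- The increment `S_{k+1}a S_{k+1}b - S_k a S_k b` of the product of low frequencies. -/
def incr (hχ : IsLPCutoff χ) (a b : 𝓢(E3, ℂ)) (k : ℤ) : 𝓢(E3, ℂ) :=
  pmul (block hχ k a) (low hχ (k + 1) b) + pmul (low hχ k a) (block hχ k b)

lemma incr_eq (hχ : IsLPCutoff χ) (a b : 𝓢(E3, ℂ)) (k : ℤ) :
    pmul (low hχ (k + 1) a) (low hχ (k + 1) b) =
      pmul (low hχ k a) (low hχ k b) + incr hχ a b k := by
  ext x
  simp [incr, block_eq]
  ring

lemma block_incr_eq_zero (hχ : IsLPCutoff χ) (a b : 𝓢(E3, ℂ)) {j k : ℤ} (h : k + 3 ≤ j) :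
    block hχ j (incr hχ a b k) = 0 := by
  have hle : (4 / 3 * 2 ^ (k + 1) + 4 / 3 * 2 ^ (k + 1) : ℝ) ≤ 3 / 4 * 2 ^ j := by
    have h1 : (2 : ℝ) ^ (k + 3) ≤ 2 ^ j := zpow_le_zpow_right₀ one_le_two h
    have h2 : (2 : ℝ) ^ (k + 3) = 4 * 2 ^ (k + 1) := by
      rw [show k + 3 = 2 + (k + 1) by ring, zpow_add₀ two_ne_zero]
      norm_num
    have h3 : (0 : ℝ) < 2 ^ (k + 1) := by positivity
    linarith
  have hlow : ∀ ξ, 4 / 3 * 2 ^ (k + 1) < ‖ξ‖ → 𝓕 (low hχ k a) ξ = 0 := fun ξ hξ => by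
    refine fourier_low_eq_zero hχ k a ξ (lt_of_le_of_lt ?_ hξ)
    gcongr
    · exact one_le_two
    · omega
  rw [incr, block_add,
    block_eq_zero_of_fourier hχ hle (fun _ => fourier_pmul_eq_zero (fourier_block_eq_zero hχ k a)
      (fourier_low_eq_zero hχ (k + 1) b)),
    block_eq_zero_of_fourier hχ hle (fun _ => fourier_pmul_eq_zero hlow
      (fourier_block_eq_zero hχ k b)), add_zero]

lemma eLpNorm_two_block_pmul_low_le (hχ : IsLPCutoff χ) (a b : 𝓢(E3, ℂ)) (j M : ℤ) :
    eLpNorm (block hχ j (pmul (low hχ M a) (low hχ M b))) 2 volume ≤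
      ∑' k, eLpNorm (block hχ j (incr hχ a b k)) 2 volume := by
  have h : ∀ N : ℕ, eLpNorm (block hχ j (pmul (low hχ M a) (low hχ M b))) 2 volume ≤
      eLpNorm (block hχ j (pmul (low hχ (M - N) a) (low hχ (M - N) b))) 2 volume
        + ∑ i ∈ Finset.range N,
          eLpNorm (block hχ j (incr hχ a b (M - 1 - i))) 2 volume := fun N => by
    induction N with
    | zero => simp
    | succ N ih =>
      have h := incr_eq hχ a b (M - 1 - N)
      rw [show M - 1 - (N : ℤ) + 1 = M - N by ring] at h
      rw [h, block_add] at ih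
      rw [Finset.sum_range_succ, add_comm (Finset.sum _ _), ← add_assoc,
        show M - ((N + 1 : ℕ) : ℤ) = M - 1 - N by push_cast; ring]
      refine ih.trans ?_
      gcongr
      exact eLpNorm_coe_add_le _ _ one_le_two
  have h' : ∀ N : ℕ, eLpNorm (block hχ j (pmul (low hχ M a) (low hχ M b))) 2 volume ≤
      eLpNorm (low hχ (M - N) a) ⊤ volume * eLpNorm b 2 volume +
        ∑' k, eLpNorm (block hχ j (incr hχ a b k)) 2 volume := fun N => by
    refine (h N).trans ?_
    gcongr
    · refine (eLpNorm_two_block_le _ _ _).trans ((eLpNorm_two_pmul_le_left _ _).trans ?_)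
      gcongr
      exact eLpNorm_two_low_le _ _ _
    · have hinj : Function.Injective fun i : ℕ => M - 1 - (i : ℤ) := fun i j h => by
        simpa using h
      exact (ENNReal.sum_le_tsum _).trans (ENNReal.tsum_comp_le_tsum_of_injective hinj
        fun k => eLpNorm (block hχ j (incr hχ a b k)) 2 volume)
  refine ge_of_tendsto' (x := atTop) ?_ h'
  have := ENNReal.Tendsto.mul_const (tendsto_eLpNorm_top_low hχ M a)
    (Or.inr ((b.memLp 2 volume).2.ne))
  rw [zero_mul] at this
  simpa using this.add_const (∑' k, eLpNorm (block hχ j (incr hχ a b k)) 2 volume)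

lemma eLpNorm_two_block_pmul_le (hχ : IsLPCutoff χ) (a b : 𝓢(E3, ℂ)) (j : ℤ) :
    eLpNorm (block hχ j (pmul a b)) 2 volume ≤
      ∑' k, eLpNorm (block hχ j (incr hχ a b k)) 2 volume := by
  have h : ∀ N : ℕ, eLpNorm (block hχ j (pmul a b)) 2 volume ≤
      (eLpNorm (a - low hχ N a : 𝓢(E3, ℂ)) ⊤ volume * eLpNorm b 2 volume
        + eLpNorm a 2 volume * eLpNorm (b - low hχ N b : 𝓢(E3, ℂ)) ⊤ volume)
        + ∑' k, eLpNorm (block hχ j (incr hχ a b k)) 2 volume := fun N => by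
    have heq : pmul a b = (pmul (a - low hχ N a) b + pmul (low hχ N a) (b - low hχ N b))
        + pmul (low hχ N a) (low hχ N b) := by
      ext x
      simp
      ring
    rw [heq, block_add]
    refine (eLpNorm_coe_add_le _ _ one_le_two).trans ?_
    gcongr
    · refine (eLpNorm_two_block_le _ _ _).trans ((eLpNorm_coe_add_le _ _ one_le_two).trans ?_)
      gcongr
      · exact eLpNorm_two_pmul_le_left _ _
      · refine (eLpNorm_two_pmul_le_right _ _).trans ?_
        gcongr
        exact eLpNorm_two_low_le _ _ _
    · exact eLpNorm_two_block_pmul_low_le hχ a b j N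
  refine ge_of_tendsto' (x := atTop) ?_ h
  have h₁ := ENNReal.Tendsto.mul_const (tendsto_eLpNorm_top_sub_low hχ a)
    (Or.inr ((b.memLp 2 volume).2.ne))
  have h₂ := ENNReal.Tendsto.const_mul (tendsto_eLpNorm_top_sub_low hχ b)
    (Or.inr ((a.memLp 2 volume).2.ne))
  rw [zero_mul] at h₁
  rw [mul_zero] at h₂
  simpa using (h₁.add h₂).add_const (∑' k, eLpNorm (block hχ j (incr hχ a b k)) 2 volume)

lemma eLpNorm_two_incr_le (hχ : IsLPCutoff χ) {a b : 𝓢(E3, ℂ)} {α : ℝ} (hα : 0 < α)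
    {A B : ℝ≥0∞} (hA : ∀ k : ℤ, eLpNorm (block hχ k a) ⊤ volume ≤ 2 ^ (k * α) * A)
    (hB : ∀ k : ℤ, eLpNorm (block hχ k b) ⊤ volume ≤ 2 ^ (k * α) * B) (k : ℤ) :
    eLpNorm (incr hχ a b k) 2 volume ≤ geomConst α * 2 ^ α * 2 ^ (k * α) *
      (B * eLpNorm (block hχ k a) 2 volume + A * eLpNorm (block hχ k b) 2 volume) := by
  rw [mul_add]
  refine (eLpNorm_coe_add_le _ _ one_le_two).trans ?_
  have h1 : (2 : ℝ≥0∞) ^ (((k + 1 : ℤ) : ℝ) * α) = 2 ^ α * 2 ^ (k * α) := by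
    rw [← two_rpow_add]
    push_cast
    ring_nf
  gcongr
  · refine (eLpNorm_two_pmul_le_right _ _).trans ?_
    calc _ ≤ eLpNorm (block hχ k a) 2 volume *
          (geomConst α * 2 ^ (((k + 1 : ℤ) : ℝ) * α) * B) := by
          gcongr
          exact eLpNorm_top_low_le hχ hα hB _
      _ = _ := by
          rw [h1]
          ring
  · refine (eLpNorm_two_pmul_le_left _ _).trans ?_
    calc _ ≤ (geomConst α * (1 * 2 ^ (k * α)) * A) * eLpNorm (block hχ k b) 2 volume := by
          rw [one_mul]
          gcongr
          exact eLpNorm_top_low_le hχ hα hA _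
      _ ≤ (geomConst α * (2 ^ α * 2 ^ (k * α)) * A) * eLpNorm (block hχ k b) 2 volume := by
          gcongr
          exact ENNReal.one_le_rpow one_le_two hα
      _ = _ := by ring

/-- The squared `L²` norm of `|ξ| 𝓕 f`. -/
def gradEnergy (f : 𝓢(E3, ℂ)) : ℝ≥0∞ := ∫⁻ ξ, (‖ξ‖ₑ * ‖𝓕 f ξ‖ₑ) ^ 2

lemma tsum_block_sq_le (hχ : IsLPCutoff χ) (f : 𝓢(E3, ℂ)) :
    ∑' k : ℤ, (2 ^ (k : ℝ) * eLpNorm (block hχ k f) 2 volume) ^ 2 ≤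
      geomConst 2 * 4 * gradEnergy f := by
  have hk : ∀ k : ℤ, (2 ^ (k : ℝ) * eLpNorm (block hχ k f) 2 volume) ^ 2 =
      ∫⁻ ξ, (2 ^ (k : ℝ) * ‖blockSymbol hχ k ξ‖ₑ) ^ 2 * ‖𝓕 f ξ‖ₑ ^ 2 := fun k => by
    rw [mul_pow, block, eLpNorm_two_mult_sq, ← lintegral_const_mul _ (by fun_prop)]
    congr 1
    ext ξ
    ring
  simp_rw [hk]
  rw [← lintegral_tsum (fun k => by fun_prop), gradEnergy, ← lintegral_const_mul _ (by fun_prop)]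
  refine lintegral_mono fun ξ => ?_
  simp only
  rw [ENNReal.tsum_mul_right, mul_pow, ← mul_assoc]
  gcongr
  by_cases h0 : ξ = 0
  · have : ∀ k : ℤ, blockSymbol hχ k ξ = 0 := fun k =>
      blockSymbol_eq_zero_of_le hχ (by rw [h0, norm_zero]; positivity)
    simp [this]
  have hpos : 0 < ‖ξ‖ := norm_pos_iff.mpr h0
  set n := Int.log 2 (4 / 3 * ‖ξ‖) with hn
  calc _ ≤ ∑' k : ℤ, (if k ≤ n then (2 : ℝ≥0∞) ^ (k * (2 : ℝ)) else 0) := by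
        refine ENNReal.tsum_le_tsum fun k => ?_
        split_ifs with hkn
        · rw [ENNReal.rpow_mul, ENNReal.rpow_two]
          gcongr
          refine mul_le_of_le_one_right zero_le ?_
          rw [← ofReal_norm]
          exact ENNReal.ofReal_le_one.mpr (norm_blockSymbol_le _ _ _)
        · rw [blockSymbol_eq_zero_of_le hχ]
          · simp
          · by_contra hlt
            push Not at hlt
            apply hkn
            rw [hn, ← Int.zpow_le_iff_le_log one_lt_two (by positivity)]
            push_cast
            linarith
    _ = geomConst 2 * (2 ^ (n : ℝ)) ^ 2 := by
        rw [tsum_two_rpow_Iic, ENNReal.rpow_mul, ENNReal.rpow_two]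
    _ ≤ geomConst 2 * (2 * ‖ξ‖ₑ) ^ 2 := by
        gcongr
        rw [← ofReal_norm]
        have h2 : (2 : ℝ≥0∞) = ENNReal.ofReal 2 := by simp
        generalize ‖ξ‖ = r at *
        rw [h2, ENNReal.ofReal_rpow_of_pos two_pos, ← ENNReal.ofReal_mul two_pos.le,
          Real.rpow_intCast]
        apply ENNReal.ofReal_le_ofReal
        have := Int.zpow_log_le_self (b := 2) (r := 4 / 3 * r) one_lt_two (by positivity)
        rw [← hn] at this
        push_cast at this
        linarith
    _ = _ := by ring

lemma besovNorm_eq (hχ : IsLPCutoff χ) (s : ℝ) (f : 𝓢(E3, ℂ)) :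
    besovNorm χ s 2 2 f =
      (∑' j : ℤ, (2 ^ (j * s) * eLpNorm (block hχ j f) 2 volume) ^ 2) ^ (1 / 2 : ℝ) := by
  simp [besovNorm, lqNorm, coe_block]

/-- The constant in the product estimate for `Ḃ^{1-α}_{2,2}`. -/
def productConst (α : ℝ) : ℝ≥0∞ :=
  2 * (geomConst (1 - α) * 2 ^ (2 * (1 - α))) ^ 2 * (geomConst α * 2 ^ α) ^ 2 *
    3 * (geomConst 2 * 4)

lemma productConst_lt_top {α : ℝ} (hα : 0 < α) (hα1 : α < 1) : productConst α < ∞ := by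
  have h₁ := (geomConst_lt_top hα).ne
  have h₂ := (geomConst_lt_top (sub_pos.mpr hα1)).ne
  have h₃ := (geomConst_lt_top two_pos).ne
  have h₄ : ∀ x : ℝ, (2 : ℝ≥0∞) ^ x ≠ ∞ := fun x =>
    ENNReal.rpow_ne_top_of_ne_zero two_ne_zero ENNReal.ofNat_ne_top
  rw [lt_top_iff_ne_top, productConst]
  have h₅ := h₄ α
  have h₆ := h₄ (2 * (1 - α))
  finiteness

lemma besovNorm_pmul_sq_le (hχ : IsLPCutoff χ) {a b : 𝓢(E3, ℂ)} {α : ℝ} (hα : 0 < α)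
    {A B : ℝ≥0∞} (hA : ∀ k : ℤ, eLpNorm (block hχ k a) ⊤ volume ≤ 2 ^ (k * α) * A)
    (hB : ∀ k : ℤ, eLpNorm (block hχ k b) ⊤ volume ≤ 2 ^ (k * α) * B) :
    besovNorm χ (1 - α) 2 2 (pmul a b) ^ 2 ≤
      productConst α * (B ^ 2 * gradEnergy a + A ^ 2 * gradEnergy b) := by
  set w : ℤ → ℝ≥0∞ := fun n => if n ≤ 2 then 2 ^ (n * (1 - α)) else 0 with hw
  set c : ℤ → ℝ≥0∞ := fun k =>
    (geomConst α * 2 ^ α) * (B * (2 ^ (k : ℝ) * eLpNorm (block hχ k a) 2 volume)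
      + A * (2 ^ (k : ℝ) * eLpNorm (block hχ k b) 2 volume)) with hc
  have hterm : ∀ j k : ℤ, 2 ^ (j * (1 - α)) * eLpNorm (block hχ j (incr hχ a b k)) 2 volume ≤
      w (j - k) * c k := fun j k => by
    by_cases h : k + 3 ≤ j
    · simp [block_incr_eq_zero hχ a b h]
    · simp only [hw, if_pos (show j - k ≤ 2 by omega)]
      have hexp : (2 : ℝ≥0∞) ^ (j * (1 - α)) * 2 ^ (k * α) =
          2 ^ (((j - k : ℤ) : ℝ) * (1 - α)) * 2 ^ (k : ℝ) := by
        rw [← two_rpow_add, ← two_rpow_add]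
        push_cast
        ring_nf
      calc _ ≤ 2 ^ (j * (1 - α)) * (geomConst α * 2 ^ α * 2 ^ (k * α) *
              (B * eLpNorm (block hχ k a) 2 volume + A * eLpNorm (block hχ k b) 2 volume)) := by
            gcongr
            exact (eLpNorm_two_block_le _ _ _).trans (eLpNorm_two_incr_le hχ hα hA hB k)
        _ = (2 ^ (j * (1 - α)) * 2 ^ (k * α)) * (geomConst α * 2 ^ α *
              (B * eLpNorm (block hχ k a) 2 volume + A * eLpNorm (block hχ k b) 2 volume)) := by
            ring
        _ = _ := by
            rw [hexp]
            simp only [hc]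
            ring
  have hw_sum : ∑' n, w n = geomConst (1 - α) * 2 ^ (2 * (1 - α)) := by
    simpa using tsum_two_rpow_Iic (1 - α) 2
  have hc_sum : ∑' k, c k ^ 2 ≤ (geomConst α * 2 ^ α) ^ 2 * 3 * (geomConst 2 * 4) *
      (B ^ 2 * gradEnergy a + A ^ 2 * gradEnergy b) := by
    calc _ ≤ ∑' k : ℤ, (geomConst α * 2 ^ α) ^ 2 * 3 *
            (B ^ 2 * (2 ^ (k : ℝ) * eLpNorm (block hχ k a) 2 volume) ^ 2
              + A ^ 2 * (2 ^ (k : ℝ) * eLpNorm (block hχ k b) 2 volume) ^ 2) := by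
          refine ENNReal.tsum_le_tsum fun k => ?_
          simp only [hc]
          rw [mul_pow, mul_assoc _ 3, ← mul_pow B, ← mul_pow A]
          gcongr
          exact ennreal_add_sq_le _ _
      _ ≤ (geomConst α * 2 ^ α) ^ 2 * 3 * (B ^ 2 * (geomConst 2 * 4 * gradEnergy a)
            + A ^ 2 * (geomConst 2 * 4 * gradEnergy b)) := by
          rw [ENNReal.tsum_mul_left, ENNReal.tsum_add, ENNReal.tsum_mul_left,
            ENNReal.tsum_mul_left]
          gcongr <;> exact tsum_block_sq_le hχ _
      _ = _ := by ring
  rw [besovNorm_eq hχ, ← ENNReal.rpow_natCast, ← ENNReal.rpow_mul]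
  norm_num
  calc _ ≤ ∑' j : ℤ, (∑' k, w (j - k) * c k) ^ 2 := by
        refine ENNReal.tsum_le_tsum fun j => ?_
        gcongr
        calc _ ≤ 2 ^ (j * (1 - α)) *
              ∑' k, eLpNorm (block hχ j (incr hχ a b k)) 2 volume := by
              gcongr
              exact eLpNorm_two_block_pmul_le hχ a b j
          _ ≤ _ := by
              rw [← ENNReal.tsum_mul_left]
              exact ENNReal.tsum_le_tsum fun k => hterm j k
    _ ≤ 2 * (∑' n, w n) ^ 2 * ∑' k, c k ^ 2 := tsum_conv_sq_le w c
    _ ≤ 2 * (∑' n, w n) ^ 2 * ((geomConst α * 2 ^ α) ^ 2 * 3 * (geomConst 2 * 4) *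
      (B ^ 2 * gradEnergy a + A ^ 2 * gradEnergy b)) := by gcongr
    _ = _ := by
        rw [hw_sum, productConst]
        ring

end Product

section BiotSavart

open SchwartzMap LineDeriv

/-- The `i`-th standard basis vector of `ℝ³`. -/
abbrev stdVec (i : Fin 3) : E3 := EuclideanSpace.single i 1

lemma fourier_lineDeriv_stdVec (f : 𝓢(E3, ℂ)) (i : Fin 3) (ξ : E3) :
    𝓕 (∂_{stdVec i} f) ξ = 2 * π * I * (ξ i * 𝓕 f ξ) := by
  rw [fourier_lineDerivOp_eq]
  have h : (fun x : E3 => inner ℝ x (stdVec i)).HasTemperateGrowth := by fun_prop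
  rw [smul_apply, smulLeftCLM_apply_apply h]
  simp [EuclideanSpace.inner_single_right]

lemma gradEnergy_le (f : 𝓢(E3, ℂ)) :
    gradEnergy f ≤ ∑ i, eLpNorm (∂_{stdVec i} f : 𝓢(E3, ℂ)) 2 volume ^ 2 := by
  have hpt : ∀ ξ : E3, (‖ξ‖ₑ * ‖𝓕 f ξ‖ₑ) ^ 2 ≤ ∑ i, ‖𝓕 (∂_{stdVec i} f) ξ‖ₑ ^ 2 := fun ξ => by
    simp only [← ofReal_norm, ← ENNReal.ofReal_mul (norm_nonneg _),
      ← ENNReal.ofReal_pow (norm_nonneg _),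
      ← ENNReal.ofReal_pow (mul_nonneg (norm_nonneg _) (norm_nonneg _))]
    rw [← ENNReal.ofReal_sum_of_nonneg fun _ _ => by positivity]
    apply ENNReal.ofReal_le_ofReal
    rw [mul_pow, EuclideanSpace.norm_sq_eq, Finset.sum_mul]
    gcongr with i
    rw [← mul_pow]
    gcongr
    rw [fourier_lineDeriv_stdVec]
    simp only [norm_mul, Complex.norm_ofNat, Complex.norm_real, norm_eq_abs,
      abs_of_pos pi_pos, Complex.norm_I]
    exact le_mul_of_one_le_left (by positivity) (by linarith [pi_gt_three])
  calc gradEnergy f ≤ ∫⁻ ξ, ∑ i, ‖𝓕 (∂_{stdVec i} f) ξ‖ₑ ^ 2 := lintegral_mono hpt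
    _ = _ := by
        rw [lintegral_finsetSum _ fun _ _ => by fun_prop]
        simp_rw [← eLpNorm_two_sq, eLpNorm_two_fourier]

/-- The antisymmetric matrix `∂ᵢ Uⱼ - ∂ⱼ Uᵢ`. -/
def vortMatrix (U : Fin 3 → 𝓢(E3, ℂ)) (i j : Fin 3) : 𝓢(E3, ℂ) :=
  ∂_{stdVec i} (U j) - ∂_{stdVec j} (U i)

variable {U : Fin 3 → 𝓢(E3, ℂ)}

lemma fourier_biotSavart (hU : ∑ i, ∂_{stdVec i} (U i) = 0) (j : Fin 3) (ξ : E3) :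
    2 * π * I * (((‖ξ‖ ^ 2 : ℝ) : ℂ) * 𝓕 (U j) ξ) = ∑ i, ξ i * 𝓕 (vortMatrix U i j) ξ := by
  have hdiv : ∑ i, (ξ i : ℂ) * 𝓕 (U i) ξ = 0 := by
    have h : 𝓕 (∑ i, ∂_{stdVec i} (U i)) ξ = 0 := by
      rw [hU, FourierTransform.fourier_zero]
      rfl
    rw [Fin.sum_univ_three, FourierTransform.fourier_add, FourierTransform.fourier_add] at h
    simp only [add_apply, fourier_lineDeriv_stdVec, ← mul_add] at h
    rw [Fin.sum_univ_three]
    simpa [pi_ne_zero] using h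
  simp only [vortMatrix, SchwartzMap.fourier_sub, sub_apply, fourier_lineDeriv_stdVec]
  rw [EuclideanSpace.norm_sq_eq]
  rw [Fin.sum_univ_three] at hdiv ⊢
  rw [Fin.sum_univ_three]
  simp only [norm_eq_abs, sq_abs]
  push_cast
  linear_combination (2 * π * I * (ξ j : ℂ)) * hdiv

lemma gradEnergy_biotSavart_le (hU : ∑ i, ∂_{stdVec i} (U i) = 0) (j : Fin 3) :
    gradEnergy (U j) ≤ 9 * ∑ i, eLpNorm (vortMatrix U i j) 2 volume ^ 2 := by
  have hpt : ∀ ξ : E3, ‖ξ‖ₑ * ‖𝓕 (U j) ξ‖ₑ ≤ ∑ i, ‖𝓕 (vortMatrix U i j) ξ‖ₑ := fun ξ => by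
    by_cases h0 : ξ = 0
    · simp [h0]
    have hpos : 0 < ‖ξ‖ := norm_pos_iff.mpr h0
    simp only [← ofReal_norm, ← ENNReal.ofReal_mul (norm_nonneg _)]
    rw [← ENNReal.ofReal_sum_of_nonneg fun _ _ => by positivity]
    apply ENNReal.ofReal_le_ofReal
    refine le_of_mul_le_mul_left ?_ hpos
    calc ‖ξ‖ * (‖ξ‖ * ‖𝓕 (U j) ξ‖) ≤ (2 * π) * (‖ξ‖ * (‖ξ‖ * ‖𝓕 (U j) ξ‖)) := by
          refine le_mul_of_one_le_left (by positivity) ?_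
          linarith [pi_gt_three]
      _ = ‖2 * π * I * (((‖ξ‖ ^ 2 : ℝ) : ℂ) * 𝓕 (U j) ξ)‖ := by
          simp only [norm_mul, Complex.norm_ofNat, Complex.norm_real, norm_eq_abs,
            abs_of_pos pi_pos, Complex.norm_I, norm_pow, abs_norm, Complex.ofReal_pow]
          ring
      _ ≤ ∑ i, ‖(ξ i : ℂ) * 𝓕 (vortMatrix U i j) ξ‖ := by
          rw [fourier_biotSavart hU]
          exact norm_sum_le _ _
      _ ≤ _ := by
          rw [Finset.mul_sum]
          gcongr with i
          rw [norm_mul, Complex.norm_real]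
          gcongr
          exact PiLp.norm_apply_le ξ i
  calc gradEnergy (U j) ≤ ∫⁻ ξ, 9 * ∑ i, ‖𝓕 (vortMatrix U i j) ξ‖ₑ ^ 2 := by
        refine lintegral_mono fun ξ => ?_
        refine (pow_le_pow_left' (hpt ξ) 2).trans ?_
        simp only [Fin.sum_univ_three]
        refine (ennreal_add_sq_le _ _).trans ?_
        calc _ ≤ 3 * (3 * (‖𝓕 (vortMatrix U 0 j) ξ‖ₑ ^ 2 + ‖𝓕 (vortMatrix U 1 j) ξ‖ₑ ^ 2)
              + 3 * ‖𝓕 (vortMatrix U 2 j) ξ‖ₑ ^ 2) := by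
              gcongr
              · exact ennreal_add_sq_le _ _
              · exact le_mul_of_one_le_left zero_le (by norm_num)
          _ = _ := by ring
    _ = _ := by
        rw [lintegral_const_mul _ (by fun_prop), lintegral_finsetSum _ fun _ _ => by fun_prop]
        simp_rw [← eLpNorm_two_sq, eLpNorm_two_fourier]

variable {χ : E3 → ℝ}

/-- The Biot–Savart symbol `ξᵢ / |ξ|²` localised to an annulus around the unit sphere. -/
def annulusSymbol (χ : E3 → ℝ) (i : Fin 3) (ξ : E3) : ℝ :=
  ξ i / ‖ξ‖ ^ 2 * (χ ((4 : ℝ)⁻¹ • ξ) - χ ((4 : ℝ) • ξ))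

lemma contDiff_annulusSymbol (hχ : IsLPCutoff χ) (i : Fin 3) :
    ContDiff ℝ ((⊤ : ℕ∞) : WithTop ℕ∞) (annulusSymbol χ i) := by
  rw [contDiff_iff_contDiffAt]
  intro ξ
  by_cases h0 : ξ = 0
  · have hev : annulusSymbol χ i =ᶠ[nhds ξ] fun _ => 0 := by
      filter_upwards [Metric.ball_mem_nhds ξ (show (0 : ℝ) < 3 / 16 by norm_num)] with η hη
      rw [h0, mem_ball_zero_iff] at hη
      have h1 : χ ((4 : ℝ)⁻¹ • η) = 1 := hχ.2.2.2.2.2.1 _ (by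
        rw [norm_smul, norm_of_nonneg (by norm_num)]; linarith [norm_nonneg η])
      have h2 : χ ((4 : ℝ) • η) = 1 := hχ.2.2.2.2.2.1 _ (by
        rw [norm_smul, norm_of_nonneg (by norm_num)]; linarith)
      rw [annulusSymbol, h1, h2, sub_self, mul_zero]
    exact contDiffAt_const.congr_of_eventuallyEq hev
  · have hχ' := hχ.1
    have h1 : ContDiff ℝ ((⊤ : ℕ∞) : WithTop ℕ∞) fun ξ : E3 =>
        χ ((4 : ℝ)⁻¹ • ξ) - χ ((4 : ℝ) • ξ) := by fun_prop
    refine ContDiffAt.mul (ContDiffAt.div ?_ ?_ (by simpa using h0)) h1.contDiffAt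
    · fun_prop
    · exact (contDiff_norm_sq ℝ).contDiffAt

lemma hasCompactSupport_annulusSymbol (hχ : IsLPCutoff χ) (i : Fin 3) :
    HasCompactSupport (annulusSymbol χ i) :=
  ((hχ.2.1.comp_smul (c := (4 : ℝ)⁻¹) (by norm_num)).sub
    (hχ.2.1.comp_smul (c := (4 : ℝ)) (by norm_num))).mul_left

/-- The rescaled localised Biot–Savart symbol, as a Schwartz function. -/
def biotSymbol (hχ : IsLPCutoff χ) (i : Fin 3) (l : ℤ) : 𝓢(E3, ℂ) :=
  HasCompactSupport.toSchwartzMap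
    (f := fun ξ => ((annulusSymbol χ i ((2 : ℝ) ^ (-l) • ξ) : ℝ) : ℂ))
    (((hasCompactSupport_annulusSymbol hχ i).comp_smul (by positivity)).comp_left
      (g := fun r : ℝ => (r : ℂ)) rfl)
    (Complex.ofRealCLM.contDiff.comp
      ((contDiff_annulusSymbol hχ i).comp (contDiff_const_smul _)))

lemma biotSymbol_apply (hχ : IsLPCutoff χ) (i : Fin 3) (l : ℤ) (ξ : E3) :
    biotSymbol hχ i l ξ = ((annulusSymbol χ i ((2 : ℝ) ^ (-l) • ξ) : ℝ) : ℂ) := rfl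

lemma biotSymbol_eq (hχ : IsLPCutoff χ) (i : Fin 3) {l : ℤ} {ξ : E3}
    (h1 : 3 / 4 * 2 ^ l < ‖ξ‖) (h2 : ‖ξ‖ ≤ 4 / 3 * 2 ^ (l + 1)) :
    biotSymbol hχ i l ξ = ((2 ^ l * (ξ i / ‖ξ‖ ^ 2) : ℝ) : ℂ) := by
  have hl : (0 : ℝ) < 2 ^ l := by positivity
  have hpos : 0 < ‖ξ‖ := lt_trans (by positivity) h1
  rw [zpow_add_one₀ two_ne_zero] at h2
  have e1 : χ ((4 : ℝ)⁻¹ • (2 : ℝ) ^ (-l) • ξ) = 1 := hχ.2.2.2.2.2.1 _ (by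
    rw [norm_smul, norm_zpow_smul, norm_of_nonneg (by norm_num), ← mul_div_assoc,
      div_le_iff₀ hl]
    linarith)
  have e2 : χ ((4 : ℝ) • (2 : ℝ) ^ (-l) • ξ) = 0 := hχ.2.2.2.2.2.2 _ (by
    rw [norm_smul, norm_zpow_smul, norm_of_nonneg (by norm_num), ← mul_div_assoc,
      lt_div_iff₀ hl]
    linarith)
  rw [biotSymbol_apply, annulusSymbol, e1, e2, norm_zpow_smul]
  simp only [PiLp.smul_apply, smul_eq_mul, zpow_neg]
  congr 1
  field_simp
  ring

/-- The `L¹` norm of the kernels of the localised Biot–Savart operators. -/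
def biotConst (hχ : IsLPCutoff χ) : ℝ≥0∞ :=
  ∑ i, eLpNorm (𝓕⁻ (biotSymbol hχ i 0) : 𝓢(E3, ℂ)) 1 volume

lemma biotConst_lt_top (hχ : IsLPCutoff χ) : biotConst hχ < ∞ :=
  ENNReal.sum_lt_top.mpr fun i _ => ((𝓕⁻ (biotSymbol hχ i 0)).memLp 1 volume).2

lemma block_biotSavart (hχ : IsLPCutoff χ) (hU : ∑ i, ∂_{stdVec i} (U i) = 0) (j : Fin 3)
    (l : ℤ) : (2 * π * I * (2 : ℂ) ^ l) • block hχ l (U j) =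
      ∑ i, mult (biotSymbol hχ i l) (block hχ l (vortMatrix U i j)) := by
  apply fourier_injective
  ext ξ
  rw [FourierTransform.fourier_smul, Fin.sum_univ_three, FourierTransform.fourier_add,
    FourierTransform.fourier_add]
  simp only [smul_apply, add_apply, fourier_mult, pmul_apply, block, smul_eq_mul]
  by_cases h1 : ‖ξ‖ ≤ 3 / 4 * 2 ^ l
  · simp [blockSymbol_eq_zero_of_le hχ h1]
  by_cases h2 : 4 / 3 * 2 ^ (l + 1) < ‖ξ‖
  · simp [blockSymbol_eq_zero_of_lt hχ h2]
  push Not at h1 h2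
  have hpos : 0 < ‖ξ‖ := lt_trans (by positivity) h1
  have hne : (‖ξ‖ : ℂ) ≠ 0 := by exact_mod_cast hpos.ne'
  simp only [biotSymbol_eq hχ _ h1 h2]
  have h := fourier_biotSavart hU j ξ
  rw [Fin.sum_univ_three] at h
  push_cast at h ⊢
  field_simp
  linear_combination (blockSymbol hχ l ξ) * h

lemma eLpNorm_top_block_biotSavart_le (hχ : IsLPCutoff χ) (hU : ∑ i, ∂_{stdVec i} (U i) = 0)
    {α : ℝ} {B : ℝ≥0∞}
    (hB : ∀ i j (l : ℤ), eLpNorm (block hχ l (vortMatrix U i j)) ⊤ volume ≤ 2 ^ (l * (1 + α)) * B)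
    (j : Fin 3) (l : ℤ) :
    eLpNorm (block hχ l (U j)) ⊤ volume ≤ 2 ^ (l * α) * (biotConst hχ * B) := by
  have hscale : ∀ i, eLpNorm (𝓕⁻ (biotSymbol hχ i l) : 𝓢(E3, ℂ)) 1 volume =
      eLpNorm (𝓕⁻ (biotSymbol hχ i 0) : 𝓢(E3, ℂ)) 1 volume := fun i =>
    eLpNorm_one_fourierInv_comp_smul (c := (2 : ℝ) ^ (-l)) (by positivity)
      fun ξ => by simp [biotSymbol_apply]
  have hmain : 2 ^ (l : ℝ) * eLpNorm (block hχ l (U j)) ⊤ volume ≤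
      2 ^ (l : ℝ) * (2 ^ (l * α) * (biotConst hχ * B)) := by
    calc 2 ^ (l : ℝ) * eLpNorm (block hχ l (U j)) ⊤ volume
        ≤ ‖2 * π * I * (2 : ℂ) ^ l‖ₑ * eLpNorm (block hχ l (U j)) ⊤ volume := by
          gcongr
          have h2 : (2 : ℝ≥0∞) = ENNReal.ofReal 2 := by simp
          rw [← ofReal_norm, h2, ENNReal.ofReal_rpow_of_pos two_pos, Real.rpow_intCast]
          apply ENNReal.ofReal_le_ofReal
          simp only [norm_mul, Complex.norm_ofNat, Complex.norm_real, norm_eq_abs,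
            abs_of_pos pi_pos, Complex.norm_I, norm_zpow]
          exact le_mul_of_one_le_left (by positivity) (by linarith [pi_gt_three])
      _ = eLpNorm (∑ i, mult (biotSymbol hχ i l) (block hχ l (vortMatrix U i j)) :
            𝓢(E3, ℂ)) ⊤ volume := by
          rw [← block_biotSavart hχ hU, ← eLpNorm_const_smul]
          rfl
      _ ≤ ∑ i, eLpNorm (mult (biotSymbol hχ i l) (block hχ l (vortMatrix U i j))) ⊤ volume := by
          rw [Fin.sum_univ_three, Fin.sum_univ_three]
          refine (eLpNorm_coe_add_le _ _ le_top).trans ?_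
          gcongr
          exact eLpNorm_coe_add_le _ _ le_top
      _ ≤ ∑ i, eLpNorm (𝓕⁻ (biotSymbol hχ i 0) : 𝓢(E3, ℂ)) 1 volume *
            (2 ^ (l * (1 + α)) * B) := by
          gcongr with i
          rw [← hscale]
          refine (eLpNorm_top_mult_le _ _).trans ?_
          gcongr
          exact hB i j l
      _ = _ := by
          rw [← Finset.sum_mul, ← biotConst, mul_add, mul_one, two_rpow_add]
          ring
  exact (ENNReal.mul_le_mul_iff_right (ENNReal.rpow_pos two_pos ENNReal.ofNat_ne_top).ne'
    (ENNReal.rpow_ne_top_of_ne_zero two_ne_zero ENNReal.ofNat_ne_top)).mp hmain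

end BiotSavart

section Vorticity

open SchwartzMap LineDeriv

/-- The complexification of a real Schwartz function. -/
def complexify (f : 𝓢(E3, ℝ)) : 𝓢(E3, ℂ) := postcompCLM Complex.ofRealCLM f

@[simp]
lemma complexify_apply (f : 𝓢(E3, ℝ)) (x : E3) : complexify f x = (f x : ℂ) := rfl

lemma eLpNorm_complexify (f : 𝓢(E3, ℝ)) (p : ℝ≥0∞) :
    eLpNorm (complexify f) p volume = eLpNorm f p volume :=
  eLpNorm_congr_norm_ae (Eventually.of_forall fun x => by simp)

lemma lineDeriv_complexify (f : 𝓢(E3, ℝ)) (m : E3) :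
    ∂_{m} (complexify f) = complexify (∂_{m} f) := by
  ext x
  rw [complexify_apply, lineDerivOp_apply_eq_fderiv, lineDerivOp_apply_eq_fderiv]
  have h := (Complex.ofRealCLM.hasFDerivAt.comp x (f.differentiableAt (x := x)).hasFDerivAt).fderiv
  exact congrArg (fun L => L m) h

/-- The vorticity of a real Schwartz vector field. -/
def vorticity (u : Fin 3 → 𝓢(E3, ℝ)) : Fin 3 → 𝓢(E3, ℝ) :=
  ![∂_{stdVec 1} (u 2) - ∂_{stdVec 2} (u 1),
    ∂_{stdVec 2} (u 0) - ∂_{stdVec 0} (u 2),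
    ∂_{stdVec 0} (u 1) - ∂_{stdVec 1} (u 0)]

lemma coe_lineDeriv_stdVec (f : 𝓢(E3, ℝ)) (i : Fin 3) : ⇑(∂_{stdVec i} f : 𝓢(E3, ℝ)) = pd i f := by
  ext x
  exact lineDerivOp_apply_eq_fderiv ..

lemma coe_vorticity (u : Fin 3 → 𝓢(E3, ℝ)) (i : Fin 3) : ⇑(vorticity u i) = curlS u i := by
  ext x
  fin_cases i <;> simp [vorticity, curlS, curl3, coe_lineDeriv_stdVec]

lemma complexify_sub (f g : 𝓢(E3, ℝ)) : complexify (f - g) = complexify f - complexify g :=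
  map_sub (postcompCLM (𝕜 := ℝ) Complex.ofRealCLM) f g

lemma exists_vortMatrix_eq (u : Fin 3 → 𝓢(E3, ℝ)) (i j : Fin 3) :
    ∃ (b : Fin 3) (c : ℝ), ‖c‖ ≤ 1 ∧
      vortMatrix (fun k => complexify (u k)) i j = c • complexify (vorticity u b) := by
  have h : vortMatrix (fun k => complexify (u k)) i j =
      complexify (∂_{stdVec i} (u j) - ∂_{stdVec j} (u i)) := by
    rw [complexify_sub, vortMatrix, lineDeriv_complexify, lineDeriv_complexify]
  rw [h]
  fin_cases i <;> fin_cases j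
  · exact ⟨0, 0, by simp, by ext; simp⟩
  · exact ⟨2, 1, by simp, by ext; simp [vorticity]⟩
  · exact ⟨1, -1, by simp, by ext; simp [vorticity]⟩
  · exact ⟨2, -1, by simp, by ext; simp [vorticity]⟩
  · exact ⟨0, 0, by simp, by ext; simp⟩
  · exact ⟨0, 1, by simp, by ext; simp [vorticity]⟩
  · exact ⟨1, 1, by simp, by ext; simp [vorticity]⟩
  · exact ⟨0, -1, by simp, by ext; simp [vorticity]⟩
  · exact ⟨0, 0, by simp, by ext; simp⟩

lemma eLpNorm_coe_smul_le {c : ℝ} (hc : ‖c‖ ≤ 1) (f : 𝓢(E3, ℂ)) (p : ℝ≥0∞) :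
    eLpNorm (c • f : 𝓢(E3, ℂ)) p volume ≤ eLpNorm f p volume :=
  eLpNorm_mono fun x => by
    rw [smul_apply, norm_smul]
    exact mul_le_of_le_one_left (norm_nonneg _) hc

variable {χ : E3 → ℝ}

lemma block_smul (hχ : IsLPCutoff χ) (k : ℤ) (c : ℝ) (f : 𝓢(E3, ℂ)) :
    block hχ k (c • f) = c • block hχ k f := by
  apply fourier_injective
  rw [FourierTransform.fourier_smul]
  ext ξ
  simp [block, FourierTransform.fourier_smul]
  ring

lemma eLpNorm_block_complexify_le (hχ : IsLPCutoff χ) (s : ℝ) {v : Fin 3 → E3 → ℝ}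
    {f : 𝓢(E3, ℝ)} {b : Fin 3} (hf : ⇑f = v b) (k : ℤ) :
    eLpNorm (block hχ k (complexify f)) ⊤ volume ≤ 2 ^ (k * s) * vecBesovInf χ (-s) v := by
  have h : 2 ^ (k * (-s)) * eLpNorm (block hχ k (complexify f)) ⊤ volume ≤
      vecBesovInf χ (-s) v := by
    rw [coe_block, show ⇑(complexify f) = fun x => ((v b x : ℝ) : ℂ) by ext x; simp [hf]]
    exact le_iSup₂_of_le b k le_rfl
  calc _ = 2 ^ (k * s) * (2 ^ (k * (-s)) * eLpNorm (block hχ k (complexify f)) ⊤ volume) := by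
        rw [← mul_assoc, ← two_rpow_add, mul_neg, add_neg_cancel, ENNReal.rpow_zero, one_mul]
    _ ≤ _ := by gcongr

lemma vecL2_sq (v : Fin 3 → E3 → ℝ) : vecL2 v ^ 2 = ∑ i, eLpNorm (v i) 2 volume ^ 2 := by
  rw [vecL2, ← ENNReal.rpow_natCast, ← ENNReal.rpow_mul]
  norm_num

lemma gradL2_sq (v : Fin 3 → E3 → ℝ) :
    gradL2 v ^ 2 = ∑ i, ∑ j, eLpNorm (pd i (v j)) 2 volume ^ 2 := by
  rw [gradL2, ← ENNReal.rpow_natCast, ← ENNReal.rpow_mul]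
  norm_num

lemma matBesov22_le {s : ℝ} {m : Fin 3 → Fin 3 → E3 → ℝ} {X : ℝ≥0∞}
    (h : ∀ i j, besovNorm χ s 2 2 (fun x => ((m i j x : ℝ) : ℂ)) ^ 2 ≤ X ^ 2) :
    matBesov22 χ s m ≤ 3 * X := by
  calc matBesov22 χ s m ≤ ((3 * X) ^ 2) ^ (1 / 2 : ℝ) := by
        rw [matBesov22]
        gcongr
        calc _ ≤ ∑ _i : Fin 3, ∑ _j : Fin 3, X ^ 2 := by
              gcongr with i _ j _
              rw [ENNReal.rpow_two]
              exact h i j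
          _ = _ := by
              simp only [Finset.sum_const, Finset.card_univ, Fintype.card_fin, nsmul_eq_mul]
              push_cast
              ring
    _ = _ := by
        rw [← ENNReal.rpow_natCast, ← ENNReal.rpow_mul]
        norm_num

variable {u : Fin 3 → 𝓢(E3, ℝ)}

lemma gradEnergy_vorticity_le (u : Fin 3 → 𝓢(E3, ℝ)) (j : Fin 3) :
    gradEnergy (complexify (vorticity u j)) ≤ gradL2 (curlS u) ^ 2 := by
  rw [gradL2_sq]
  refine (gradEnergy_le _).trans ?_
  gcongr with i
  rw [lineDeriv_complexify, eLpNorm_complexify, coe_lineDeriv_stdVec, coe_vorticity]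
  exact Finset.single_le_sum (f := fun j => eLpNorm (pd i (curlS u j)) 2 volume ^ 2)
    (fun _ _ => zero_le) (Finset.mem_univ j)

lemma sum_lineDeriv_complexify (hu : ∀ x, ∑ i : Fin 3, pd i (⇑(u i)) x = 0) :
    ∑ i, ∂_{stdVec i} (complexify (u i)) = 0 := by
  ext x
  have h := hu x
  simp only [Fin.sum_univ_three, ← coe_lineDeriv_stdVec] at h ⊢
  simp only [lineDeriv_complexify, add_apply, complexify_apply, ← Complex.ofReal_add, h]
  simp

lemma gradEnergy_velocity_le (hu : ∀ x, ∑ i : Fin 3, pd i (⇑(u i)) x = 0) (j : Fin 3) :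
    gradEnergy (complexify (u j)) ≤ 27 * vecL2 (curlS u) ^ 2 := by
  have h : ∀ i, eLpNorm (vortMatrix (fun k => complexify (u k)) i j) 2 volume ^ 2 ≤
      vecL2 (curlS u) ^ 2 := fun i => by
    obtain ⟨b, c, hc, hbc⟩ := exists_vortMatrix_eq u i j
    rw [vecL2_sq, hbc]
    refine (pow_le_pow_left' (eLpNorm_coe_smul_le hc _ 2) 2).trans ?_
    rw [eLpNorm_complexify, coe_vorticity]
    exact Finset.single_le_sum (f := fun j => eLpNorm (curlS u j) 2 volume ^ 2)
      (fun _ _ => zero_le) (Finset.mem_univ b)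
  calc _ ≤ 9 * ∑ i, eLpNorm (vortMatrix (fun k => complexify (u k)) i j) 2 volume ^ 2 :=
        gradEnergy_biotSavart_le (sum_lineDeriv_complexify hu) j
    _ ≤ 9 * ∑ _i : Fin 3, vecL2 (curlS u) ^ 2 := by
        gcongr 9 * ?_
        exact Finset.sum_le_sum fun i _ => h i
    _ = _ := by
        simp only [Finset.sum_const, Finset.card_univ, Fintype.card_fin, nsmul_eq_mul]
        push_cast
        ring

lemma eLpNorm_top_block_velocity_le (hχ : IsLPCutoff χ) (α : ℝ)
    (hu : ∀ x, ∑ i : Fin 3, pd i (⇑(u i)) x = 0) (j : Fin 3) (k : ℤ) :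
    eLpNorm (block hχ k (complexify (u j))) ⊤ volume ≤
      2 ^ (k * α) * (biotConst hχ * vecBesovInf χ (-1 - α) (curlS u)) := by
  refine eLpNorm_top_block_biotSavart_le (U := fun k => complexify (u k)) hχ
    (sum_lineDeriv_complexify hu) (fun i j l => ?_) j k
  obtain ⟨b, c, hc, hbc⟩ := exists_vortMatrix_eq u i j
  rw [hbc, block_smul]
  refine (eLpNorm_coe_smul_le hc _ _).trans ?_
  rw [show -1 - α = -(1 + α) by ring]
  exact eLpNorm_block_complexify_le hχ (1 + α) (coe_vorticity u b) l

end Vorticity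

/-- **Estimate (3.8)**: for `0 < α < 1` there is a constant `C > 0` such that for every
divergence-free Schwartz vector field `u` on `ℝ³` with vorticity `ω = curl u`,
`‖ω ⊗ u‖_{Ḃ^{1-α}_{2,2}} ≤ C (‖∇ω‖_{L²} ‖ω‖_{Ḃ^{-1-α}_{∞,∞}} +
‖ω‖_{Ḃ^{-α}_{∞,∞}} ‖ω‖_{L²})`. -/
theorem tensor_product_besov_estimate
    (χ : E3 → ℝ) (hχ : IsLPCutoff χ) (α : ℝ) (hα : 0 < α) (hα1 : α < 1) :
    ∃ C : ℝ≥0∞, 0 < C ∧ C < ∞ ∧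
      ∀ u : Fin 3 → 𝓢(E3, ℝ), (∀ x, ∑ i : Fin 3, pd i (⇑(u i)) x = 0) →
        matBesov22 χ (1 - α) (fun i j x => curlS u i x * u j x) ≤
          C * (gradL2 (curlS u) * vecBesovInf χ (-1 - α) (curlS u)
            + vecBesovInf χ (-α) (curlS u) * vecL2 (curlS u)) := by
  set K := productConst α ^ (1 / 2 : ℝ) * (biotConst hχ + 6) with hK
  refine ⟨3 * K + 1, by positivity, ?_, fun u hu => ?_⟩
  · have h₁ := (productConst_lt_top hα hα1).ne
    have h₂ := (biotConst_lt_top hχ).ne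
    have h₃ : productConst α ^ (1 / 2 : ℝ) ≠ ∞ := ENNReal.rpow_ne_top_of_nonneg (by norm_num) h₁
    rw [lt_top_iff_ne_top, hK]
    finiteness
  set G := gradL2 (curlS u)
  set B := vecBesovInf χ (-1 - α) (curlS u)
  set A := vecBesovInf χ (-α) (curlS u)
  set L := vecL2 (curlS u)
  have hX : ∀ i j, besovNorm χ (1 - α) 2 2 (fun x => ((curlS u i x * u j x : ℝ) : ℂ)) ^ 2 ≤
      (K * (G * B + A * L)) ^ 2 := fun i j => by
    have hcoe : (fun x => ((curlS u i x * u j x : ℝ) : ℂ)) =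
        ⇑(SchwartzMap.pmul (complexify (vorticity u i)) (complexify (u j))) := by
      ext x
      simp [coe_vorticity]
    rw [hcoe]
    calc _ ≤ productConst α * ((biotConst hχ * B) ^ 2 * gradEnergy (complexify (vorticity u i))
          + A ^ 2 * gradEnergy (complexify (u j))) :=
          besovNorm_pmul_sq_le hχ hα
            (fun k => eLpNorm_block_complexify_le hχ α (coe_vorticity u i) k)
            (fun k => eLpNorm_top_block_velocity_le hχ α hu j k)
      _ ≤ productConst α * ((biotConst hχ * B) ^ 2 * G ^ 2 + A ^ 2 * (36 * L ^ 2)) := by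
          gcongr
          · exact gradEnergy_vorticity_le u i
          · refine (gradEnergy_velocity_le hu j).trans ?_
            gcongr
            norm_num
      _ = productConst α * ((biotConst hχ * (G * B)) ^ 2 + (6 * (A * L)) ^ 2) := by ring
      _ ≤ productConst α * ((biotConst hχ + 6) * (G * B + A * L)) ^ 2 := by
          gcongr
          calc _ ≤ (biotConst hχ * (G * B) + 6 * (A * L)) ^ 2 := by
                rw [add_sq, add_right_comm]
                exact le_self_add
            _ ≤ _ := by
                gcongr
                rw [mul_add]
                gcongr
                · exact le_self_add
                · exact le_add_self
      _ = _ := by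
          have hsq : (productConst α ^ (1 / 2 : ℝ)) ^ 2 = productConst α := by
            rw [← ENNReal.rpow_natCast, ← ENNReal.rpow_mul]
            norm_num
          rw [hK, mul_assoc, mul_pow (_ ^ (1 / 2 : ℝ)), hsq]
  calc _ ≤ 3 * (K * (G * B + A * L)) := matBesov22_le hX
    _ ≤ _ := by
        rw [← mul_assoc]
        gcongr
        exact le_self_add
end
end
end
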